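/- arXiv:2208.14773 — 5 statements merged into one kernel-verified Lean document; each statement's English description precedes it below -/
import Mathlib

section
/- Let q be a prime power, k ≥ 1, and n = 2k+1. Let Σ be a (k+1)-space and σ ⊂ Σ a (k-1)-space of PG(2k+1,q), let K_1, K_2 be two nonempty sets partitioning the set of all k-spaces κ with σ ⊂ κ ⊂ Σ, let B_0 be the set of all points lying in some κ ∈ K_1 but not in σ, and let B_{n-1} be the set of all hyperplanes containing some κ ∈ K_2 but not containing Σ. Then every k-space of PG(2k+1,q) contains a point of B_0 or is contained in a hyperplane of B_{n-1}. -/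
/-!
Suppose that `W` contains no point of `B₀` and lies in no hyperplane of `Bₙ₋₁`. Then `κ ⊓ W ≤ σ` for
`κ ∈ K₁` and `Σ ≤ κ ⊔ W` for `κ ∈ K₂`. Let `M = σ ⊔ (W ⊓ Σ)`, which lies between `σ` and `Σ`. By
the modular law, `κ ⊓ M = σ` for `κ ∈ K₁` and `κ ⊔ M = Σ` for `κ ∈ K₂`. As `K₁` and `K₂` are
nonempty, `M` is neither `Σ` nor `σ`, so `M` itself belongs to `K₁` or to `K₂`; taking `κ = M` gives
`M = σ` or `M = Σ`, a contradiction.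
-/

section Lattice

variable {α : Type*}

theorem exists_isAtom_le_not_le [PartialOrder α] [OrderBot α] [IsAtomistic α] {a b : α}
    (h : ¬ a ≤ b) : ∃ p, IsAtom p ∧ p ≤ a ∧ ¬ p ≤ b := by
  simpa only [le_iff_atom_le_imp (a := a), not_forall, exists_prop] using h

theorem exists_isCoatom_le_not_le [PartialOrder α] [OrderTop α] [IsCoatomistic α] {a b : α}
    (h : ¬ a ≤ b) : ∃ c, IsCoatom c ∧ b ≤ c ∧ ¬ a ≤ c :=
  exists_isAtom_le_not_le (α := αᵒᵈ) h

variable [Lattice α] [IsModularLattice α] {a b : α} {K₁ K₂ : Set α}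

theorem exists_not_inf_le_or_exists_not_le_sup (hK₁ : K₁.Nonempty) (hK₂ : K₂.Nonempty)
    (hK : K₁ ∪ K₂ = Set.Ioo a b) (w : α) :
    (∃ x ∈ K₁, ¬ x ⊓ w ≤ a) ∨ ∃ x ∈ K₂, ¬ b ≤ x ⊔ w := by
  by_contra! ⟨h₁, h₂⟩
  have mem_Ioo₁ {x} (hx : x ∈ K₁) : x ∈ Set.Ioo a b := hK ▸ Or.inl hx
  have mem_Ioo₂ {x} (hx : x ∈ K₂) : x ∈ Set.Ioo a b := hK ▸ Or.inr hx
  obtain ⟨x₁, hx₁⟩ := hK₁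
  obtain ⟨x₂, hx₂⟩ := hK₂
  have hab : a ≤ b := ((mem_Ioo₁ hx₁).1.trans (mem_Ioo₁ hx₁).2).le
  let m := a ⊔ w ⊓ b
  have inf_m {x} (hx : x ∈ K₁) : x ⊓ m = a := by
    obtain ⟨hax, hxb⟩ := mem_Ioo₁ hx
    calc x ⊓ m = a ⊔ (w ⊓ b) ⊓ x := by rw [inf_comm, sup_inf_assoc_of_le _ hax.le]
      _ = a ⊔ x ⊓ w := by rw [inf_assoc, inf_eq_right.2 hxb.le, inf_comm]
      _ = a := sup_eq_left.2 (h₁ x hx)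
  have sup_m {x} (hx : x ∈ K₂) : x ⊔ m = b := by
    obtain ⟨hax, hxb⟩ := mem_Ioo₂ hx
    calc x ⊔ m = x ⊔ w ⊓ b := by rw [← sup_assoc, sup_eq_left.2 hax.le]
      _ = (x ⊔ w) ⊓ b := (sup_inf_assoc_of_le w hxb.le).symm
      _ = b := inf_eq_right.2 (h₂ x hx)
  have m_ne_a : m ≠ a := fun hm ↦ (mem_Ioo₂ hx₂).2.ne <| by
    rw [← sup_m hx₂, hm, sup_eq_left.2 (mem_Ioo₂ hx₂).1.le]
  have m_ne_b : m ≠ b := fun hm ↦ (mem_Ioo₁ hx₁).1.ne <| by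
    rw [← inf_m hx₁, hm, inf_eq_left.2 (mem_Ioo₁ hx₁).2.le]
  have hm : m ∈ K₁ ∪ K₂ := by
    rw [hK]
    exact ⟨lt_of_le_of_ne le_sup_left m_ne_a.symm,
      lt_of_le_of_ne (sup_le hab inf_le_right) m_ne_b⟩
  rcases hm with hm₁ | hm₂
  · exact m_ne_a (inf_idem m ▸ inf_m hm₁)
  · exact m_ne_b (sup_idem m ▸ sup_m hm₂)

theorem stmt_0_general [BoundedOrder α] [IsAtomistic α] [IsCoatomistic α]
    (hK₁ : K₁.Nonempty) (hK₂ : K₂.Nonempty) (hK : K₁ ∪ K₂ = Set.Ioo a b) (w : α) :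
    (∃ p, (IsAtom p ∧ ∃ κ ∈ K₁, p ≤ κ ∧ ¬ p ≤ a) ∧ p ≤ w) ∨
      ∃ H, (IsCoatom H ∧ ∃ κ ∈ K₂, κ ≤ H ∧ ¬ b ≤ H) ∧ w ≤ H := by
  refine (exists_not_inf_le_or_exists_not_le_sup hK₁ hK₂ hK w).imp ?_ ?_
  · rintro ⟨κ, hκ, hne⟩
    obtain ⟨p, hp, hle, hpa⟩ := exists_isAtom_le_not_le hne
    exact ⟨p, ⟨hp, κ, hκ, hle.trans inf_le_left, hpa⟩, hle.trans inf_le_right⟩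
  · rintro ⟨κ, hκ, hne⟩
    obtain ⟨H, hH, hle, hbH⟩ := exists_isCoatom_le_not_le hne
    exact ⟨H, ⟨hH, κ, hκ, le_sup_left.trans hle, hbH⟩, le_sup_right.trans hle⟩

end Lattice

section VectorSpace

open Module

variable {K V : Type*} [DivisionRing K] [AddCommGroup V] [Module K V]

instance submodule_isCoatomistic : IsCoatomistic (Submodule K V) where
  isGLB_coatoms W := by
    refine ⟨{H | IsCoatom H ∧ W ≤ H}, ⟨fun H hH ↦ hH.2, fun T hT v hvT ↦ ?_⟩, fun H hH ↦ hH.1⟩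
    by_contra hvW
    obtain ⟨f, hfv, hWf⟩ := Submodule.exists_le_ker_of_notMem hvW
    have hf : Function.Surjective f := LinearMap.surjective fun h ↦ hfv (by simp [h])
    exact hfv (hT ⟨LinearMap.isCoatom_ker_of_surjective hf, hWf⟩ hvT)

theorem setOf_finrank_eq_add_one_eq_Ioo {U U' : Submodule K V} {m : ℕ}
    (hU : finrank K U = m) (hU' : finrank K U' = m + 2) :
    {W : Submodule K V | finrank K W = m + 1 ∧ U ≤ W ∧ W ≤ U'} = Set.Ioo U U' := by
  have : FiniteDimensional K U' := .of_finrank_pos (by omega)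
  ext W
  constructor
  · rintro ⟨hW, hUW, hWU'⟩
    exact ⟨hUW.lt_of_ne (by rintro rfl; omega), hWU'.lt_of_ne (by rintro rfl; omega)⟩
  · rintro ⟨hUW, hWU'⟩
    have : FiniteDimensional K W := Submodule.finiteDimensional_of_le hWU'.le
    have := Submodule.finrank_lt_finrank_of_lt hUW
    have := Submodule.finrank_lt_finrank_of_lt hWU'
    exact ⟨by omega, hUW.le, hWU'.le⟩

theorem isCoatom_iff_finrank_add_one_eq [FiniteDimensional K V] {H : Submodule K V} :
    IsCoatom H ↔ finrank K H + 1 = finrank K V := by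
  rw [← isSimpleModule_iff_isCoatom, isSimpleModule_iff_finrank_eq_one,
    ← H.finrank_quotient_add_finrank]
  omega

end VectorSpace

/-- Construction 1 blocks every `k`-space of `PG(2k+1,q)`.
`PG(2k+1,q)` is modelled via the vector space `F^(2k+2)` over a finite field `F`
with `q = Fintype.card F` elements; a projective `m`-space is a linear subspace of
vector dimension `m+1`.  `SIG` is a `(k+1)`-space, `sig ⊂ SIG` is a `(k-1)`-space,
`K1, K2` partition the `k`-spaces `κ` with `sig ⊂ κ ⊂ SIG` into two nonempty sets,
`B0` is the set of points in some `κ ∈ K1` but not in `sig`, and `Bn` is the set of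
hyperplanes through some `κ ∈ K2` not containing `SIG`.  Then every `k`-space
contains a point of `B0` or is contained in a hyperplane of `Bn`. -/
theorem stmt_0 {F : Type} [Field F] [Fintype F] (k : ℕ) (hk : 1 ≤ k)
    (SIG sig : Submodule F (Fin (2 * k + 2) → F))
    (hSIG : Module.finrank F SIG = k + 2)
    (hsig : Module.finrank F sig = k)
    (hsub : sig < SIG)
    (K1 K2 : Set (Submodule F (Fin (2 * k + 2) → F)))
    (hK1 : K1.Nonempty) (hK2 : K2.Nonempty) (hdisj : Disjoint K1 K2)
    (hpart : K1 ∪ K2 =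
      {κ : Submodule F (Fin (2 * k + 2) → F) | Module.finrank F κ = k + 1 ∧ sig ≤ κ ∧ κ ≤ SIG})
    (B0 Bn : Set (Submodule F (Fin (2 * k + 2) → F)))
    (hB0 : B0 = {p : Submodule F (Fin (2 * k + 2) → F) | Module.finrank F p = 1 ∧ ∃ κ ∈ K1, p ≤ κ ∧ ¬ p ≤ sig})
    (hBn : Bn = {H : Submodule F (Fin (2 * k + 2) → F) | Module.finrank F H = 2 * k + 1 ∧ ∃ κ ∈ K2, κ ≤ H ∧ ¬ SIG ≤ H}) :
    ∀ W : Submodule F (Fin (2 * k + 2) → F), Module.finrank F W = k + 1 →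
      (∃ p ∈ B0, p ≤ W) ∨ (∃ H ∈ Bn, W ≤ H) := by
  intro W _
  rw [setOf_finrank_eq_add_one_eq_Ioo hsig hSIG] at hpart
  simpa [hB0, hBn, Submodule.isAtom_iff_finrank_eq_one, isCoatom_iff_finrank_add_one_eq] using
    stmt_0_general hK1 hK2 hpart W
end

section
/- Let q be a prime power and let k, n be integers with 0 ≤ k < n and k < (n-1)/2; if q = 2 suppose moreover that k ≠ (n-2)/2. Let B = B_0 ∪ B_{n-1} be a blocking set with respect to k-spaces in PG(n,q) consisting of points and hyperplanes. Then |B| ≥ θ_{k+1} = (q^{k+2}-1)/(q-1), with equality if and only if B_0 is empty and B_{n-1} consists of all hyperplanes containing a fixed (n-k-2)-space. -/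
/-- `theta q m = (q^(m+1) - 1)/(q - 1)` is the number of points of `PG(m,q)`. -/
def theta (q m : ℕ) : ℕ := (q ^ (m + 1) - 1) / (q - 1)

/-!
A double count of flags shows that every point, respectively every hyperplane, blocks a fixed
proportion of the subspaces of a given rank. If `|B| ≤ θ_{k+1}`, these proportions are too small for
`B` to block all subspaces of rank `k + 2`, so some unblocked `S` of that rank exists. No hyperplane
of `S` contains a point of `B₀`, so each of them is the trace on `S` of a member of `B_{n-1}`. This
gives `θ_{k+1} ≤ |B_{n-1}|`.

At equality, `B₀` is empty and distinct members of `B_{n-1}` have distinct traces on every unblocked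
`S`. Any hyperplane outside `B_{n-1}` contains such an `S`, which forces `B_{n-1}` to contain, with
two hyperplanes, the whole pencil they span. In the dual space `B_{n-1}` is then the set of points
of a subspace.
-/

open Module Submodule

lemma theta_mul_pred (q m : ℕ) : theta q m * (q - 1) = q ^ (m + 1) - 1 := by
  refine Nat.div_mul_cancel ?_
  simpa using Nat.sub_dvd_pow_sub_pow q 1 (m + 1)

lemma theta_lt_pow {q : ℕ} (hq : 1 < q) (m : ℕ) : theta q m < q ^ (m + 1) := by
  have hpos : 0 < q ^ (m + 1) := Nat.pow_pos (by lia)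
  have hle : theta q m ≤ theta q m * (q - 1) := Nat.le_mul_of_pos_right _ (by lia)
  rw [theta_mul_pred] at hle
  lia

variable {F V : Type*} [Field F] [AddCommGroup V] [Module F V]

section FlagCounting

lemma exists_submodule_finrank_eq {d : ℕ} (hd : d ≤ finrank F V) :
    ∃ W : Submodule F V, finrank F W = d := by
  obtain ⟨f, hf⟩ := exists_linearIndependent_of_le_finrank hd
  exact ⟨span F (Set.range f), by simpa using finrank_span_eq_card hf⟩

lemma exists_linearEquiv_map_eq [FiniteDimensional F V] {U U' : Submodule F V}
    (h : finrank F U = finrank F U') :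
    ∃ g : V ≃ₗ[F] V, U.map (g : V →ₗ[F] V) = U' := by
  let f : U ≃ₗ[F] U' := LinearEquiv.ofFinrankEq U U' h
  obtain ⟨g, hg⟩ := exists_linearEquiv_restrict_eq f
  refine ⟨g, eq_of_le_of_finrank_eq ?_ ((LinearEquiv.finrank_map_eq g U).trans h)⟩
  rintro _ ⟨x, hx, rfl⟩
  exact hg ⟨x, hx⟩ ▸ (f ⟨x, hx⟩).2

lemma ncard_superspaces_congr [FiniteDimensional F V] {U U' : Submodule F V}
    (h : finrank F U = finrank F U') (d : ℕ) :
    {W : Submodule F V | finrank F W = d ∧ U ≤ W}.ncard =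
      {W : Submodule F V | finrank F W = d ∧ U' ≤ W}.ncard := by
  obtain ⟨g, rfl⟩ := exists_linearEquiv_map_eq h
  refine Set.ncard_congr' ((orderIsoMapComap g).toEquiv.subtypeEquiv fun W ↦ ?_)
  exact and_congr (by rw [← LinearEquiv.finrank_map_eq g]; rfl)
    (map_le_map_iff_of_injective g.injective _ _).symm

lemma ncard_subspaces_congr [FiniteDimensional F V] {W W' : Submodule F V}
    (h : finrank F W = finrank F W') (d : ℕ) :
    {U : Submodule F V | finrank F U = d ∧ U ≤ W}.ncard =
      {U : Submodule F V | finrank F U = d ∧ U ≤ W'}.ncard := by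
  obtain ⟨g, rfl⟩ := exists_linearEquiv_map_eq h
  refine Set.ncard_congr' ((orderIsoMapComap g).toEquiv.subtypeEquiv fun U ↦ ?_)
  exact and_congr (by rw [← LinearEquiv.finrank_map_eq g]; rfl)
    (map_le_map_iff_of_injective g.injective _ _).symm

theorem ncard_mul_ncard_superspaces [Finite V] (U₀ W₀ : Submodule F V) :
    {U : Submodule F V | finrank F U = finrank F U₀}.ncard *
        {W : Submodule F V | finrank F W = finrank F W₀ ∧ U₀ ≤ W}.ncard =
      {W : Submodule F V | finrank F W = finrank F W₀}.ncard *
        {U : Submodule F V | finrank F U = finrank F U₀ ∧ U ≤ W₀}.ncard := by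
  classical
  have := Fintype.ofFinite (Submodule F V)
  simp only [Set.ncard_eq_toFinset_card']
  refine Finset.card_mul_eq_card_mul (fun U W ↦ U ≤ W) (fun U hU ↦ ?_) fun W hW ↦ ?_
  · rw [Set.mem_toFinset, Set.mem_ofPred_eq] at hU
    have hcongr := ncard_superspaces_congr hU (finrank F W₀)
    simp only [Set.ncard_eq_toFinset_card'] at hcongr
    rw [← hcongr]
    congr 1
    ext; simp [Finset.bipartiteAbove]
  · rw [Set.mem_toFinset, Set.mem_ofPred_eq] at hW
    have hcongr := ncard_subspaces_congr hW (finrank F U₀)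
    simp only [Set.ncard_eq_toFinset_card'] at hcongr
    rw [← hcongr]
    congr 1
    ext; simp [Finset.bipartiteBelow]

end FlagCounting

section PointsAndHyperplanes

lemma finrank_add_one_eq_iff_finrank_dualAnnihilator [FiniteDimensional F V]
    {H : Submodule F V} :
    finrank F H + 1 = finrank F V ↔ finrank F H.dualAnnihilator = 1 := by
  have := Subspace.finrank_add_finrank_dualAnnihilator_eq H
  lia

lemma exists_dual_ker_eq [FiniteDimensional F V] {H : Submodule F V}
    (hH : finrank F H + 1 = finrank F V) : ∃ f : Dual F V, f ≠ 0 ∧ LinearMap.ker f = H := by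
  have hlt : H < ⊤ := lt_top_of_finrank_lt_finrank (by lia)
  obtain ⟨f, hf, hle⟩ := exists_le_ker_of_lt_top H hlt
  have := Dual.finrank_ker_add_one_of_ne_zero hf
  exact ⟨f, hf, (eq_of_le_of_finrank_eq hle (by lia)).symm⟩

lemma eq_of_hyperplane_le [FiniteDimensional F V] {H K : Submodule F V}
    (hH : finrank F H + 1 = finrank F V) (hK : finrank F K + 1 = finrank F V) (hHK : H ≤ K) :
    H = K :=
  eq_of_le_of_finrank_eq hHK (by lia)

lemma finrank_inf_add_one [FiniteDimensional F V] {S H : Submodule F V}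
    (hH : finrank F H + 1 = finrank F V) (hS : ¬S ≤ H) :
    finrank F ↥(S ⊓ H) + 1 = finrank F S := by
  have hlt : finrank F H < finrank F ↥(S ⊔ H) := finrank_lt_finrank_of_lt (by simpa using hS)
  have hle := finrank_le (S ⊔ H)
  have := finrank_sup_add_finrank_inf_eq S H
  lia

lemma inf_eq_inf_of_inf_le [FiniteDimensional F V] {H₁ H₂ H₃ : Submodule F V}
    (h₁ : finrank F H₁ + 1 = finrank F V) (h₂ : finrank F H₂ + 1 = finrank F V)
    (h₃ : finrank F H₃ + 1 = finrank F V) (h₁₂ : H₁ ≠ H₂) (h₁₃ : H₁ ≠ H₃) (h₂₃ : H₂ ≠ H₃)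
    (hle : H₁ ⊓ H₂ ≤ H₃) : H₁ ⊓ H₃ = H₂ ⊓ H₃ := by
  have hinf₁₂ := finrank_inf_add_one h₂ fun h ↦ h₁₂ (eq_of_hyperplane_le h₁ h₂ h)
  have hinf₁₃ := finrank_inf_add_one h₃ fun h ↦ h₁₃ (eq_of_hyperplane_le h₁ h₃ h)
  have hinf₂₃ := finrank_inf_add_one h₃ fun h ↦ h₂₃ (eq_of_hyperplane_le h₂ h₃ h)
  calc H₁ ⊓ H₃ = H₁ ⊓ H₂ := (eq_of_le_of_finrank_eq (le_inf inf_le_left hle) (by lia)).symm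
    _ = H₂ ⊓ H₃ := eq_of_le_of_finrank_eq (le_inf inf_le_right hle) (by lia)

lemma finrank_comap_subtype_add_one [FiniteDimensional F V] {S H : Submodule F V}
    (hH : finrank F H + 1 = finrank F V) (hS : ¬S ≤ H) :
    finrank F (H.comap S.subtype) + 1 = finrank F S := by
  rw [← finrank_map_subtype_eq, map_comap_subtype, finrank_inf_add_one hH hS]

theorem ncard_points_mul_pred [FiniteDimensional F V] (D : Submodule F V) :
    {p : Submodule F V | finrank F p = 1 ∧ p ≤ D}.ncard * (Nat.card F - 1) =
      Nat.card F ^ finrank F D - 1 := by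
  rw [← natCard_eq_pow_finrank, Projectivization.card F D,
    Nat.card_congr (Projectivization.equivSubmodule F D)]
  congr 1
  have himage : {p : Submodule F V | finrank F p = 1 ∧ p ≤ D} =
      map D.subtype '' {p : Submodule F D | finrank F p = 1} := by
    ext p
    constructor
    · rintro ⟨hp, hpD⟩
      have hmap : (p.comap D.subtype).map D.subtype = p := by
        rw [map_comap_subtype, inf_eq_right.mpr hpD]
      exact ⟨p.comap D.subtype, by rw [Set.mem_ofPred_eq, ← finrank_map_subtype_eq, hmap, hp], hmap⟩
    · rintro ⟨p, hp, rfl⟩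
      exact ⟨(finrank_map_subtype_eq D p).trans hp, map_subtype_le D p⟩
  rw [himage, Set.ncard_image_of_injective _ (map_injective_of_injective D.injective_subtype)]
  rfl

theorem ncard_hyperplanes_mul_pred [FiniteDimensional F V] (W : Submodule F V) :
    {H : Submodule F V | finrank F H + 1 = finrank F V ∧ W ≤ H}.ncard * (Nat.card F - 1) =
      Nat.card F ^ (finrank F V - finrank F W) - 1 := by
  have hW := Subspace.finrank_add_finrank_dualAnnihilator_eq W
  rw [show finrank F V - finrank F W = finrank F W.dualAnnihilator by lia,
    ← ncard_points_mul_pred W.dualAnnihilator]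
  congr 1
  refine Set.ncard_congr' (Subspace.orderIsoFiniteDimensional.toEquiv.subtypeEquiv fun H ↦ ?_)
  exact and_congr finrank_add_one_eq_iff_finrank_dualAnnihilator
    Subspace.dualAnnihilator_le_dualAnnihilator_iff.symm

lemma ncard_hyperplanes_eq_theta [Finite F] [FiniteDimensional F V] {m : ℕ} {W : Submodule F V}
    (hW : finrank F W + (m + 1) = finrank F V) :
    {H : Submodule F V | finrank F H + 1 = finrank F V ∧ W ≤ H}.ncard = theta (Nat.card F) m := by
  have hq : 1 < Nat.card F := Finite.one_lt_card
  have hcount := ncard_hyperplanes_mul_pred W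
  rw [show finrank F V - finrank F W = m + 1 by lia, ← theta_mul_pred] at hcount
  exact Nat.eq_of_mul_eq_mul_right (by lia) hcount

theorem ncard_superspaces_point_mul [Finite V] {p : Submodule F V} (hp : finrank F p = 1)
    {d : ℕ} (hd : d ≤ finrank F V) :
    {W : Submodule F V | finrank F W = d ∧ p ≤ W}.ncard * (Nat.card F ^ finrank F V - 1) =
      {W : Submodule F V | finrank F W = d}.ncard * (Nat.card F ^ d - 1) := by
  obtain ⟨W₀, rfl⟩ := exists_submodule_finrank_eq (F := F) hd
  have hflag := ncard_mul_ncard_superspaces p W₀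
  have hpoints := ncard_points_mul_pred (⊤ : Submodule F V)
  simp only [le_top, and_true, finrank_top] at hpoints
  rw [hp] at hflag
  rw [← hpoints, ← ncard_points_mul_pred W₀, ← mul_assoc, ← mul_assoc, ← hflag]
  ring

theorem ncard_subspaces_hyperplane_mul [Finite V] {H : Submodule F V}
    (hH : finrank F H + 1 = finrank F V) {d : ℕ} (hd : d ≤ finrank F V) :
    {W : Submodule F V | finrank F W = d ∧ W ≤ H}.ncard * (Nat.card F ^ finrank F V - 1) =
      {W : Submodule F V | finrank F W = d}.ncard * (Nat.card F ^ (finrank F V - d) - 1) := by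
  obtain ⟨W₀, rfl⟩ := exists_submodule_finrank_eq (F := F) hd
  have hflag := ncard_mul_ncard_superspaces W₀ H
  have hhyperplanes := ncard_hyperplanes_mul_pred (⊥ : Submodule F V)
  simp only [bot_le, and_true, finrank_bot, Nat.sub_zero] at hhyperplanes
  have hiff (K : Submodule F V) : finrank F K = finrank F H ↔ finrank F K + 1 = finrank F V := by
    lia
  simp only [hiff] at hflag
  rw [← hhyperplanes, ← ncard_hyperplanes_mul_pred W₀, ← mul_assoc, ← mul_assoc, hflag]
  ring

end PointsAndHyperplanes

section Blocking

/-- The subspace `W` is blocked by the set of points `B₀` and the set of hyperplanes `Bₙ`: it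
contains an element of `B₀` or lies in an element of `Bₙ`. A blocking set with respect to
`k`-spaces is one that blocks every `W` of rank `k + 1`. -/
def IsBlocked (B₀ Bₙ : Set (Submodule F V)) (W : Submodule F V) : Prop :=
  (∃ p ∈ B₀, p ≤ W) ∨ ∃ H ∈ Bₙ, W ≤ H

lemma ncard_biUnion_mul_le {α β : Type*} {B : Set β} (hB : B.Finite) {f : β → Set α} {c m : ℕ}
    (hf : ∀ b ∈ B, (f b).ncard * c = m) : (⋃ b ∈ B, f b).ncard * c ≤ B.ncard * m := by
  lift B to Finset β using hB
  calc (⋃ b ∈ B, f b).ncard * c ≤ (∑ b ∈ B, (f b).ncard) * c :=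
        Nat.mul_le_mul_right c (Finset.set_ncard_biUnion_le B f)
    _ = Set.ncard (B : Set β) * m := by
        rw [Finset.sum_mul, Finset.sum_congr rfl hf, Finset.sum_const, smul_eq_mul,
          Set.ncard_coe_finset]

-- Averaging over all subspaces of rank `d`: each point and each hyperplane blocks the same
-- proportion of them.
theorem pow_finrank_sub_one_le_of_forall_isBlocked [Finite V] {B₀ Bₙ : Set (Submodule F V)} {d : ℕ}
    (hd : d ≤ finrank F V) (hB₀ : ∀ p ∈ B₀, finrank F p = 1)
    (hBₙ : ∀ H ∈ Bₙ, finrank F H + 1 = finrank F V)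
    (hblock : ∀ W : Submodule F V, finrank F W = d → IsBlocked B₀ Bₙ W) :
    Nat.card F ^ finrank F V - 1 ≤
      B₀.ncard * (Nat.card F ^ d - 1) + Bₙ.ncard * (Nat.card F ^ (finrank F V - d) - 1) := by
  set c := Nat.card F ^ finrank F V - 1
  set 𝒲 := {W : Submodule F V | finrank F W = d}
  let above (p : Submodule F V) := {W : Submodule F V | finrank F W = d ∧ p ≤ W}
  let below (H : Submodule F V) := {W : Submodule F V | finrank F W = d ∧ W ≤ H}
  have hcover : 𝒲 ⊆ (⋃ p ∈ B₀, above p) ∪ ⋃ H ∈ Bₙ, below H := by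
    intro W hW
    rcases hblock W hW with ⟨p, hp, hpW⟩ | ⟨H, hH, hWH⟩
    · exact .inl (Set.mem_biUnion hp ⟨hW, hpW⟩)
    · exact .inr (Set.mem_biUnion hH ⟨hW, hWH⟩)
  have habove := ncard_biUnion_mul_le B₀.toFinite fun p hp ↦
    ncard_superspaces_point_mul (hB₀ p hp) hd
  have hbelow := ncard_biUnion_mul_le Bₙ.toFinite fun H hH ↦
    ncard_subspaces_hyperplane_mul (hBₙ H hH) hd
  have h𝒲 : 0 < 𝒲.ncard := (Set.ncard_pos).mpr (exists_submodule_finrank_eq hd)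
  refine Nat.le_of_mul_le_mul_left ?_ h𝒲
  calc 𝒲.ncard * c
      ≤ ((⋃ p ∈ B₀, above p).ncard + (⋃ H ∈ Bₙ, below H).ncard) * c :=
        Nat.mul_le_mul_right c ((Set.ncard_le_ncard hcover).trans (Set.ncard_union_le _ _))
    _ ≤ B₀.ncard * (𝒲.ncard * (Nat.card F ^ d - 1)) +
          Bₙ.ncard * (𝒲.ncard * (Nat.card F ^ (finrank F V - d) - 1)) := by
        rw [add_mul]
        exact add_le_add habove hbelow
    _ = _ := by ring

lemma pred_mul_pred_lt_pred_mul {a b : ℕ} (ha : 1 < a) (hb : 0 < b) :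
    (a - 1) * (b - 1) < a * b - 1 := by
  obtain ⟨a, rfl⟩ := Nat.exists_eq_add_of_lt ha
  obtain ⟨b, rfl⟩ := Nat.exists_eq_add_of_lt hb
  grind

theorem exists_not_le_hyperplane [Finite F] [Finite V] {Bₙ : Set (Submodule F V)} {d : ℕ}
    (hd₀ : 0 < d) (hd : d ≤ finrank F V) (hBₙ : ∀ H ∈ Bₙ, finrank F H + 1 = finrank F V)
    (hcard : Bₙ.ncard < Nat.card F ^ d) :
    ∃ S : Submodule F V, finrank F S = d ∧ ∀ H ∈ Bₙ, ¬S ≤ H := by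
  by_contra! hblock
  have hbound := pow_finrank_sub_one_le_of_forall_isBlocked (B₀ := ∅) hd (by simp) hBₙ
    fun W hW ↦ .inr (hblock W hW)
  obtain ⟨e, he⟩ := Nat.exists_eq_add_of_le hd
  rw [he, Nat.add_sub_cancel_left, pow_add, Set.ncard_empty, zero_mul, zero_add] at hbound
  have ha : 1 < Nat.card F ^ d := Nat.one_lt_pow hd₀.ne' Finite.one_lt_card
  have hb : 0 < Nat.card F ^ e := Nat.pow_pos Nat.card_pos
  generalize Nat.card F ^ d = a at *
  generalize Nat.card F ^ e = b at *
  have hle : Bₙ.ncard * (b - 1) ≤ (a - 1) * (b - 1) := Nat.mul_le_mul_right _ (by lia)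
  exact (pred_mul_pred_lt_pred_mul ha hb).not_ge (hbound.trans hle)

theorem exists_not_isBlocked_of_two_mul_le [Finite F] [Finite V] {B₀ Bₙ : Set (Submodule F V)}
    {d : ℕ} (hd₀ : 0 < d) (hd : 2 * d ≤ finrank F V) (hB₀ : ∀ p ∈ B₀, finrank F p = 1)
    (hBₙ : ∀ H ∈ Bₙ, finrank F H + 1 = finrank F V)
    (hcard : B₀.ncard + Bₙ.ncard < Nat.card F ^ d) :
    ∃ S : Submodule F V, finrank F S = d ∧ ¬IsBlocked B₀ Bₙ S := by
  by_contra! hblock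
  have hbound := pow_finrank_sub_one_le_of_forall_isBlocked (by lia) hB₀ hBₙ hblock
  obtain ⟨e, he⟩ := Nat.exists_eq_add_of_le (show d ≤ finrank F V by lia)
  rw [he, Nat.add_sub_cancel_left, pow_add] at hbound
  have ha : 1 < Nat.card F ^ d := Nat.one_lt_pow hd₀.ne' Finite.one_lt_card
  have hab : Nat.card F ^ d ≤ Nat.card F ^ e := Nat.pow_le_pow_right Nat.card_pos (by lia)
  generalize Nat.card F ^ d = a at *
  generalize Nat.card F ^ e = b at *
  refine (pred_mul_pred_lt_pred_mul ha (ha.le.trans hab)).not_ge ?_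
  calc
    a * b - 1 ≤ B₀.ncard * (a - 1) + Bₙ.ncard * (b - 1) := hbound
    _ ≤ B₀.ncard * (b - 1) + Bₙ.ncard * (b - 1) := by gcongr
    _ = (B₀.ncard + Bₙ.ncard) * (b - 1) := by ring
    _ ≤ (a - 1) * (b - 1) := Nat.mul_le_mul_right _ (by lia)

lemma lt_of_add_mul_pred_le {q Q x y : ℤ} (hq : 3 ≤ q) (hQ : 1 ≤ Q)
    (hsum : (x + y) * (q - 1) ≤ q * Q - 1)
    (hle : q * Q ^ 2 - 1 ≤ x * (Q - 1) + y * (q * Q - 1)) :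
    x * (q * Q - 1) + y * (Q - 1) < q * Q ^ 2 - 1 := by
  by_contra! hle'
  have hadd : 2 * (q * Q ^ 2 - 1) ≤ (x + y) * (q * Q + Q - 2) := by linarith
  have hmul : (q - 1) * (2 * (q * Q ^ 2 - 1)) ≤ (q * Q - 1) * (q * Q + Q - 2) := calc
    (q - 1) * (2 * (q * Q ^ 2 - 1)) ≤ (q - 1) * ((x + y) * (q * Q + Q - 2)) := by gcongr; lia
    _ = (x + y) * (q - 1) * (q * Q + Q - 2) := by ring
    _ ≤ (q * Q - 1) * (q * Q + Q - 2) := by gcongr; nlinarith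
  have hdiff : (q - 1) * (2 * (q * Q ^ 2 - 1)) - (q * Q - 1) * (q * Q + Q - 2) =
      q * Q ^ 2 * (q - 3) + 2 * q * (Q - 1) + q * Q + Q := by ring
  refine hmul.not_gt (sub_pos.mp ?_)
  have : 0 ≤ q - 3 := by lia
  have : 0 ≤ Q - 1 := by lia
  rw [hdiff]
  positivity

-- Passing from rank `d` to rank `d + 1` exchanges the weights of `B₀` and `Bₙ` in the averaging
-- bound, so the two bounds add up to one on `|B₀| + |Bₙ|`.
theorem exists_not_isBlocked_of_finrank_eq_two_mul_add_one [Finite F] [Finite V]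
    {B₀ Bₙ : Set (Submodule F V)} {d : ℕ} (hV : finrank F V = 2 * d + 1) (hF : Nat.card F ≠ 2)
    (hB₀ : ∀ p ∈ B₀, finrank F p = 1) (hBₙ : ∀ H ∈ Bₙ, finrank F H + 1 = finrank F V)
    (hblock : ∀ W : Submodule F V, finrank F W = d → IsBlocked B₀ Bₙ W)
    (hcard : B₀.ncard + Bₙ.ncard ≤ theta (Nat.card F) d) :
    ∃ S : Submodule F V, finrank F S = d + 1 ∧ ¬IsBlocked B₀ Bₙ S := by
  by_contra! hblock'
  have hbound := pow_finrank_sub_one_le_of_forall_isBlocked (by lia) hB₀ hBₙ hblock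
  have hbound' := pow_finrank_sub_one_le_of_forall_isBlocked (by lia) hB₀ hBₙ hblock'
  have hθ := (Nat.mul_le_mul_right (Nat.card F - 1) hcard).trans_eq (theta_mul_pred _ _)
  rw [hV, show 2 * d + 1 - d = d + 1 by lia] at hbound
  rw [hV, show 2 * d + 1 - (d + 1) = d by lia] at hbound'
  have hq : 1 < Nat.card F := Finite.one_lt_card
  have hpow (m : ℕ) : 1 ≤ Nat.card F ^ m := Nat.one_le_pow _ _ (by lia)
  zify [hpow, hq.le] at hbound hbound' hθ
  have hsq : (Nat.card F : ℤ) ^ (2 * d + 1) = Nat.card F * (Nat.card F ^ d) ^ 2 := by ring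
  rw [hsq, pow_succ' _ d] at hbound hbound'
  rw [pow_succ'] at hθ
  exact (lt_of_add_mul_pred_le (by lia) (by exact_mod_cast hpow d) hθ hbound).not_ge hbound'

lemma hyperplanes_subset_image_comap_subtype [FiniteDimensional F V]
    {B₀ Bₙ : Set (Submodule F V)} {S : Submodule F V}
    (hBₙ : ∀ H ∈ Bₙ, finrank F H + 1 = finrank F V)
    (hblock : ∀ W : Submodule F V, finrank F W + 1 = finrank F S → IsBlocked B₀ Bₙ W)
    (hS : ¬IsBlocked B₀ Bₙ S) :
    {T : Submodule F S | finrank F T + 1 = finrank F S} ⊆ comap S.subtype '' Bₙ := by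
  intro T (hT : finrank F T + 1 = finrank F S)
  rcases hblock (T.map S.subtype) (by rwa [finrank_map_subtype_eq]) with ⟨p, hp, hpT⟩ | ⟨H, hH, hTH⟩
  · exact (hS (.inl ⟨p, hp, hpT.trans (map_subtype_le S T)⟩)).elim
  · have hHS := finrank_comap_subtype_add_one (hBₙ H hH) fun hSH ↦ hS (.inr ⟨H, hH, hSH⟩)
    exact ⟨H, hH, (eq_of_le_of_finrank_eq (map_le_iff_le_comap.mp hTH) (by lia)).symm⟩

theorem theta_le_ncard_image_comap_subtype [Finite F] [Finite V] {B₀ Bₙ : Set (Submodule F V)}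
    {d : ℕ} {S : Submodule F V} (hBₙ : ∀ H ∈ Bₙ, finrank F H + 1 = finrank F V)
    (hblock : ∀ W : Submodule F V, finrank F W = d → IsBlocked B₀ Bₙ W)
    (hSd : finrank F S = d + 1) (hS : ¬IsBlocked B₀ Bₙ S) :
    theta (Nat.card F) d ≤ (comap S.subtype '' Bₙ).ncard := by
  have hcount := ncard_hyperplanes_eq_theta (m := d) (W := (⊥ : Submodule F S))
    (by simpa using hSd.symm)
  simp only [bot_le, and_true] at hcount
  rw [← hcount]
  exact Set.ncard_le_ncard
    (hyperplanes_subset_image_comap_subtype hBₙ (fun W hW ↦ hblock W (by lia)) hS)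

theorem injOn_comap_subtype_of_ncard_eq_theta [Finite F] [Finite V] {B₀ Bₙ : Set (Submodule F V)}
    {d : ℕ} {S : Submodule F V} (hBₙ : ∀ H ∈ Bₙ, finrank F H + 1 = finrank F V)
    (hblock : ∀ W : Submodule F V, finrank F W = d → IsBlocked B₀ Bₙ W)
    (hcard : Bₙ.ncard = theta (Nat.card F) d) (hSd : finrank F S = d + 1)
    (hS : ¬IsBlocked B₀ Bₙ S) : Set.InjOn (comap S.subtype) Bₙ := by
  refine Set.injOn_of_ncard_image_eq (le_antisymm (Set.ncard_image_le Bₙ.toFinite) ?_)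
  exact hcard.trans_le (theta_le_ncard_image_comap_subtype hBₙ hblock hSd hS)

-- If `H₃` were missing, `H₁` and `H₂` would have the same trace on it, hence on an unblocked
-- `S ≤ H₃`; but at equality in the bound restriction to `S` is injective on `Bₙ`.
theorem mem_of_inf_le_of_ncard_eq_theta [Finite F] [Finite V] {Bₙ : Set (Submodule F V)} {d : ℕ}
    (hd : d + 2 ≤ finrank F V) (hBₙ : ∀ H ∈ Bₙ, finrank F H + 1 = finrank F V)
    (hblock : ∀ W : Submodule F V, finrank F W = d → IsBlocked ∅ Bₙ W)
    (hcard : Bₙ.ncard = theta (Nat.card F) d) {H₁ H₂ H₃ : Submodule F V} (h₁ : H₁ ∈ Bₙ)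
    (h₂ : H₂ ∈ Bₙ) (h₃ : finrank F H₃ + 1 = finrank F V) (hle : H₁ ⊓ H₂ ≤ H₃) : H₃ ∈ Bₙ := by
  by_contra hH₃
  have hnle : ∀ H ∈ Bₙ, ¬H₃ ≤ H := fun H hH h ↦ hH₃ (eq_of_hyperplane_le h₃ (hBₙ H hH) h ▸ hH)
  have hne : H₁ ≠ H₂ := by
    rintro rfl
    rw [inf_idem] at hle
    exact hH₃ (eq_of_hyperplane_le (hBₙ _ h₁) h₃ hle ▸ h₁)
  have hcard_lt : (comap H₃.subtype '' Bₙ).ncard < Nat.card F ^ (d + 1) :=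
    (Set.ncard_image_le Bₙ.toFinite).trans_lt (hcard.trans_lt (theta_lt_pow Finite.one_lt_card d))
  obtain ⟨S, hS, hSBₙ⟩ := exists_not_le_hyperplane d.succ_pos (by lia)
    (Set.forall_mem_image.mpr fun H hH ↦ finrank_comap_subtype_add_one (hBₙ H hH) (hnle H hH))
    hcard_lt
  have hS' : ¬IsBlocked ∅ Bₙ (S.map H₃.subtype) := by
    rintro (⟨p, hp, -⟩ | ⟨H, hH, hSH⟩)
    · exact hp
    · exact hSBₙ _ ⟨H, hH, rfl⟩ (map_le_iff_le_comap.mp hSH)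
  refine hne (injOn_comap_subtype_of_ncard_eq_theta hBₙ hblock hcard
    ((finrank_map_subtype_eq H₃ S).trans hS) hS' h₁ h₂ ?_)
  have htrace : H₁ ⊓ H₃ = H₂ ⊓ H₃ := inf_eq_inf_of_inf_le (hBₙ _ h₁) (hBₙ _ h₂) h₃ hne
    (fun h ↦ hH₃ (h ▸ h₁)) (fun h ↦ hH₃ (h ▸ h₂)) hle
  have hcomap (H : Submodule F V) : H.comap (S.map H₃.subtype).subtype =
      (H ⊓ H₃).comap (S.map H₃.subtype).subtype := by
    rw [comap_inf, comap_subtype_eq_top.mpr (map_subtype_le H₃ S), inf_top_eq]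
  rw [hcomap H₁, hcomap H₂, htrace]

theorem exists_eq_setOf_hyperplane_ge [FiniteDimensional F V] {Bₙ : Set (Submodule F V)}
    (hBₙ : ∀ H ∈ Bₙ, finrank F H + 1 = finrank F V)
    (hpencil : ∀ H₁ ∈ Bₙ, ∀ H₂ ∈ Bₙ, ∀ H₃ : Submodule F V, finrank F H₃ + 1 = finrank F V →
      H₁ ⊓ H₂ ≤ H₃ → H₃ ∈ Bₙ) :
    ∃ W : Submodule F V, Bₙ = {H : Submodule F V | finrank F H + 1 = finrank F V ∧ W ≤ H} := by
  let D : Submodule F (Dual F V) :=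
    { carrier := {f | f ≠ 0 → LinearMap.ker f ∈ Bₙ}
      zero_mem' := fun h ↦ (h rfl).elim
      add_mem' := by
        intro f g hf hg hfg
        rcases eq_or_ne f 0 with rfl | hf₀
        · simpa using hg (by simpa using hfg)
        rcases eq_or_ne g 0 with rfl | hg₀
        · simpa using hf (by simpa using hfg)
        refine hpencil _ (hf hf₀) _ (hg hg₀) _ (Dual.finrank_ker_add_one_of_ne_zero hfg) ?_
        rintro x ⟨hfx, hgx⟩
        rw [LinearMap.mem_ker, LinearMap.add_apply, hfx, hgx, add_zero]
      smul_mem' := by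
        intro c f hf hcf
        rw [LinearMap.ker_smul _ _ (left_ne_zero_of_smul hcf)]
        exact hf (right_ne_zero_of_smul hcf) }
  refine ⟨D.dualCoannihilator, Set.ext fun H ↦ ⟨fun hH ↦ ⟨hBₙ H hH, ?_⟩, fun ⟨hH, hDH⟩ ↦ ?_⟩⟩
  · obtain ⟨f, -, rfl⟩ := exists_dual_ker_eq (hBₙ H hH)
    exact fun x hx ↦ (mem_dualCoannihilator x).mp hx f fun _ ↦ hH
  · obtain ⟨f, hf, rfl⟩ := exists_dual_ker_eq hH
    have hfD : f ∈ D.dualCoannihilator.dualAnnihilator :=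
      (mem_dualAnnihilator f).mpr fun x hx ↦ hDH hx
    rw [Subspace.dualCoannihilator_dualAnnihilator_eq] at hfD
    exact hfD hf

theorem exists_eq_setOf_hyperplane_ge_of_ncard_eq_theta [Finite F] [Finite V]
    {Bₙ : Set (Submodule F V)} {d : ℕ} (hd : d + 2 ≤ finrank F V)
    (hBₙ : ∀ H ∈ Bₙ, finrank F H + 1 = finrank F V)
    (hblock : ∀ W : Submodule F V, finrank F W = d → IsBlocked ∅ Bₙ W)
    (hcard : Bₙ.ncard = theta (Nat.card F) d) :
    ∃ W : Submodule F V, finrank F W + (d + 1) = finrank F V ∧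
      Bₙ = {H : Submodule F V | finrank F H + 1 = finrank F V ∧ W ≤ H} := by
  obtain ⟨W, hW⟩ := exists_eq_setOf_hyperplane_ge hBₙ fun H₁ h₁ H₂ h₂ H₃ h₃ hle ↦
    mem_of_inf_le_of_ncard_eq_theta hd hBₙ hblock hcard h₁ h₂ h₃ hle
  refine ⟨W, ?_, hW⟩
  have hq : 1 < Nat.card F := Finite.one_lt_card
  have hcount := ncard_hyperplanes_mul_pred W
  rw [← hW, hcard, theta_mul_pred] at hcount
  have hpow (m : ℕ) : 0 < Nat.card F ^ m := Nat.pow_pos (by lia)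
  have hexp : d + 1 = finrank F V - finrank F W :=
    Nat.pow_right_injective hq (Nat.pred_inj (hpow _) (hpow _) hcount)
  have := finrank_le W
  lia

theorem theta_le_ncard_hyperplanes [Finite F] [Finite V] {B₀ Bₙ : Set (Submodule F V)} {d : ℕ}
    (hd : 2 * d < finrank F V) (hF : Nat.card F = 2 → finrank F V ≠ 2 * d + 1)
    (hB₀ : ∀ p ∈ B₀, finrank F p = 1) (hBₙ : ∀ H ∈ Bₙ, finrank F H + 1 = finrank F V)
    (hblock : ∀ W : Submodule F V, finrank F W = d → IsBlocked B₀ Bₙ W)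
    (hcard : B₀.ncard + Bₙ.ncard ≤ theta (Nat.card F) d) :
    theta (Nat.card F) d ≤ Bₙ.ncard := by
  obtain ⟨S, hSd, hS⟩ : ∃ S : Submodule F V, finrank F S = d + 1 ∧ ¬IsBlocked B₀ Bₙ S := by
    by_cases hV : finrank F V = 2 * d + 1
    · exact exists_not_isBlocked_of_finrank_eq_two_mul_add_one hV (hF · hV) hB₀ hBₙ
        hblock hcard
    · exact exists_not_isBlocked_of_two_mul_le d.succ_pos (by lia) hB₀ hBₙ
        (hcard.trans_lt (theta_lt_pow Finite.one_lt_card _))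
  exact (theta_le_ncard_image_comap_subtype hBₙ hblock hSd hS).trans
    (Set.ncard_image_le Bₙ.toFinite)

end Blocking

theorem stmt_3_general {F V : Type*} [Field F] [Finite F] [AddCommGroup V] [Module F V] {k n : ℕ}
    (hV : finrank F V = n + 1) (hkn : 2 * k + 1 < n) (h2 : Nat.card F = 2 → n ≠ 2 * k + 2)
    {B0 Bn : Set (Submodule F V)} (hB0 : ∀ p ∈ B0, finrank F p = 1)
    (hBn : ∀ H ∈ Bn, finrank F H = n)
    (hblock : ∀ W : Submodule F V, finrank F W = k + 1 → (∃ p ∈ B0, p ≤ W) ∨ ∃ H ∈ Bn, W ≤ H) :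
    theta (Nat.card F) (k + 1) ≤ B0.ncard + Bn.ncard ∧
    (B0.ncard + Bn.ncard = theta (Nat.card F) (k + 1) ↔
      B0 = ∅ ∧ ∃ W : Submodule F V, finrank F W = n - k - 1 ∧
        Bn = {H : Submodule F V | finrank F H = n ∧ W ≤ H}) := by
  have := finite_of_finrank_eq_succ hV
  have : Finite V := Module.finite_of_finite F
  have hrank (H : Submodule F V) : finrank F H = n ↔ finrank F H + 1 = finrank F V := by lia
  simp only [hrank] at hBn ⊢
  have hmain := theta_le_ncard_hyperplanes (by lia) (by lia) hB0 hBn hblock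
  refine ⟨?_, fun heq ↦ ?_, ?_⟩
  · by_contra! hlt
    have := hmain hlt.le
    lia
  · have hθ := hmain heq.le
    obtain rfl : B0 = ∅ := (Set.ncard_eq_zero B0.toFinite).mp (by lia)
    obtain ⟨W, hW, hBnW⟩ := exists_eq_setOf_hyperplane_ge_of_ncard_eq_theta (by lia) hBn hblock
      (by simpa using heq)
    exact ⟨rfl, W, by lia, hBnW⟩
  · rintro ⟨rfl, W, hW, rfl⟩
    rw [Set.ncard_empty, zero_add, ncard_hyperplanes_eq_theta (m := k + 1) (by lia)]

/-- Let `0 ≤ k < n` with `k < (n-1)/2` (i.e. `2k+1 < n`), and if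
`q = 2` suppose `k ≠ (n-2)/2` (i.e. `n ≠ 2k+2`).  For a blocking set `B = B0 ∪ Bn`
of points and hyperplanes with respect to `k`-spaces in `PG(n,q)`, we have
`|B| ≥ θ_(k+1)`, with equality iff `B` consists of all hyperplanes through a fixed
`(n-k-2)`-space (a subspace of vector dimension `n-k-1`). -/
theorem stmt_3 {F : Type} [Field F] [Fintype F] (k n : ℕ)
    (hkn : 2 * k + 1 < n)
    (h2 : Fintype.card F = 2 → n ≠ 2 * k + 2)
    (B0 Bn : Set (Submodule F (Fin (n + 1) → F)))
    (hB0 : ∀ p ∈ B0, Module.finrank F p = 1)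
    (hBn : ∀ H ∈ Bn, Module.finrank F H = n)
    (hblock : ∀ W : Submodule F (Fin (n + 1) → F), Module.finrank F W = k + 1 →
      (∃ p ∈ B0, p ≤ W) ∨ (∃ H ∈ Bn, W ≤ H)) :
    theta (Fintype.card F) (k + 1) ≤ B0.ncard + Bn.ncard ∧
    (B0.ncard + Bn.ncard = theta (Fintype.card F) (k + 1) ↔
      B0 = ∅ ∧ ∃ W : Submodule F (Fin (n + 1) → F), Module.finrank F W = n - k - 1 ∧
        Bn = {H : Submodule F (Fin (n + 1) → F) | Module.finrank F H = n ∧ W ≤ H}) := by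
  simp only [← Nat.card_eq_fintype_card] at h2 ⊢
  exact stmt_3_general (finrank_fin_fun F) hkn h2 hB0 hBn hblock
end

section
/- Let q be a prime power and let k, n be integers with 0 ≤ k < n and k > (n-1)/2; if q = 2 suppose moreover that k ≠ n/2. Let B = B_0 ∪ B_{n-1} be a blocking set with respect to k-spaces in PG(n,q) consisting of points and hyperplanes. Then |B| ≥ θ_{n-k} = (q^{n-k+1}-1)/(q-1), with equality if and only if B_{n-1} is empty and B_0 consists of all points of a fixed (n-k)-space. -/
/-! Write `g d` for the number of points of a `d`-dimensional vector space, so that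
`θ_m = g (m + 1)`, and let `N = k + m + 1` be the dimension of the ambient space. Suppose that
`b < g (m + 1)` points and `c ≤ g (m + 1) - b` hyperplanes are given. An unblocked subspace is built
one dimension at a time. If `U` has codimension `d + 1` and contains none of the points, then at
least `g (d + 1) - b` of its covers contain none of them either, while each hyperplane through `U`
contains only `g d` of its covers; hence some admissible cover `W` satisfies
`h W * (g (d + 1) - b) ≤ h U * g d`, where `h` counts the given hyperplanes through a subspace.

A random subspace of codimension `d` lies in `c * g d / g N` of the hyperplanes on average, and
avoiding the points costs at most a factor `1 - b / ((q - 1) * g d)`: the greedy step preserves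
`h U * (1 - b / ((q - 1) * g d)) ≤ c * g d / g N`. At dimension `k` this gives
`h U * g m < g (m + 1) - b`, so that one more step yields `h W < 1`.

In the case of equality there are only points, and they are closed under joins: if a point of the
line joining two of them were not among them, it could be extended to a `k`-dimensional `U` avoiding
all the points; the two points span the same cover of `U`, so one of the `g (m + 1)` covers of `U`
would remain unblocked. -/

section PointCount

/-- The number of points of the projective space of a `d`-dimensional vector space over a field with
`q` elements. The index is the vector space dimension, which makes the empty projective space
(`d = 0`) available; `theta` uses the projective dimension. -/
def pointCount (q d : ℕ) : ℕ := ∑ i ∈ Finset.range d, q ^ i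

variable {q : ℕ}

lemma theta_eq_pointCount (hq : 2 ≤ q) (m : ℕ) : theta q m = pointCount q (m + 1) :=
  (Nat.geomSum_eq hq _).symm

lemma pointCount_succ (q d : ℕ) : pointCount q (d + 1) = q * pointCount q d + 1 :=
  geom_sum_succ

lemma pointCount_add (q d e : ℕ) :
    pointCount q (d + e) = q ^ d * pointCount q e + pointCount q d := by
  simp only [pointCount, Finset.sum_range_add, pow_add, Finset.mul_sum, add_comm]

lemma pointCount_strictMono (hq : 0 < q) : StrictMono (pointCount q) :=
  strictMono_nat_of_lt_succ fun d => by
    simpa only [pointCount, Finset.sum_range_succ, lt_add_iff_pos_right] using pow_pos hq d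

lemma sub_one_mul_pointCount {R : Type*} [CommRing R] (q d : ℕ) :
    ((q : R) - 1) * pointCount q d = (q : R) ^ d - 1 := by
  rw [pointCount, Nat.cast_sum, mul_comm]
  simpa only [Nat.cast_pow] using geom_sum_mul (q : R) d

lemma pointCount_le_pow (hq : 2 ≤ q) (d : ℕ) : pointCount q d ≤ q ^ d :=
  (Nat.geomSum_lt hq fun _ => Finset.mem_range.1).le

lemma pointCount_sq_lt (hq : 2 ≤ q) {d e : ℕ} (hd : 0 < d) (hde : 2 * d ≤ e) :
    pointCount q d ^ 2 < pointCount q e := by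
  have hpos : 0 < pointCount q d := pointCount_strictMono (by lia) hd
  calc pointCount q d ^ 2 = pointCount q d * pointCount q d := sq _
    _ ≤ q ^ d * pointCount q d := Nat.mul_le_mul_right _ (pointCount_le_pow hq d)
    _ < q ^ d * pointCount q d + pointCount q d := Nat.lt_add_of_pos_right hpos
    _ = pointCount q (d + d) := (pointCount_add q d d).symm
    _ ≤ pointCount q e := (pointCount_strictMono (by lia)).monotone (by lia)

end PointCount

section Weight

variable {R : Type*} [CommRing R] [LinearOrder R] [IsStrictOrderedRing R]

lemma weight_bound_step {q b c s t u h h' : R} (hb : 0 ≤ b) (hs : 0 ≤ s)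
    (hst : q * s ≤ t) (ht : 0 < t) (hbt : b ≤ (q - 1) * t) (hu : 0 ≤ u) (hh' : 0 ≤ h')
    (hstep : h' * (t - b) ≤ h * s)
    (hbound : h * ((q - 1) * t - b) * u ≤ c * (q - 1) * t ^ 2) :
    h' * ((q - 1) * s - b) * u ≤ c * (q - 1) * s ^ 2 := by
  have hfactor : ((q - 1) * s - b) * t ^ 2 ≤ (t - b) * (s * ((q - 1) * t - b)) := by
    have h₁ : 0 ≤ b * t * (t - q * s) := mul_nonneg (mul_nonneg hb ht.le) (sub_nonneg.2 hst)
    have h₂ : 0 ≤ s * b ^ 2 := mul_nonneg hs (sq_nonneg b)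
    linear_combination h₁ + h₂
  refine le_of_mul_le_mul_right ?_ (pow_pos ht 2)
  calc h' * ((q - 1) * s - b) * u * t ^ 2
      = h' * u * (((q - 1) * s - b) * t ^ 2) := by ring
    _ ≤ h' * u * ((t - b) * (s * ((q - 1) * t - b))) :=
        mul_le_mul_of_nonneg_left hfactor (mul_nonneg hh' hu)
    _ = h' * (t - b) * (s * ((q - 1) * t - b) * u) := by ring
    _ ≤ h * s * (s * ((q - 1) * t - b) * u) :=
        mul_le_mul_of_nonneg_right hstep
          (mul_nonneg (mul_nonneg hs (sub_nonneg.2 hbt)) hu)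
    _ = h * ((q - 1) * t - b) * u * s ^ 2 := by ring
    _ ≤ c * (q - 1) * t ^ 2 * s ^ 2 := mul_le_mul_of_nonneg_right hbound (sq_nonneg s)
    _ = c * (q - 1) * s ^ 2 * t ^ 2 := by ring

lemma weight_lt_one {c s u h D : R} (hD : 0 < D) (hcD : c ≤ D) (hs : 0 ≤ s) (hsu : s < u)
    (hbound : h * D * u ≤ c * s) : h < 1 := by
  refine lt_of_mul_lt_mul_right ?_ (mul_pos hD (hs.trans_lt hsu)).le
  calc h * (D * u) = h * D * u := (mul_assoc h D u).symm
    _ ≤ c * s := hbound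
    _ ≤ D * s := mul_le_mul_of_nonneg_right hcD hs
    _ < D * u := mul_lt_mul_of_pos_left hsu hD
    _ = 1 * (D * u) := (one_mul _).symm

lemma weight_mul_le {q b c t u v h : R} (ht : 0 < t) (hbt : t ≤ (q - 1) * t - b) (hu : 0 ≤ u)
    (hvu : v * t ≤ u) (hh : 0 ≤ h)
    (hbound : h * ((q - 1) * t - b) * u ≤ c * (q - 1) * t ^ 2) : h * v ≤ c * (q - 1) := by
  refine le_of_mul_le_mul_right ?_ (pow_pos ht 2)
  calc h * v * t ^ 2 = h * t * (v * t) := by ring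
    _ ≤ h * t * u := mul_le_mul_of_nonneg_left hvu (mul_nonneg hh ht.le)
    _ ≤ h * ((q - 1) * t - b) * u :=
        mul_le_mul_of_nonneg_right (mul_le_mul_of_nonneg_left hbt hh) hu
    _ ≤ c * (q - 1) * t ^ 2 := hbound

end Weight

lemma weight_mul_pointCount_lt {q k m b c h : ℕ} (hq : 2 ≤ q) (hmk : m ≤ k)
    (hq2 : q = 2 → m ≠ k) (hb : b < pointCount q (m + 1)) (hbc : b + c ≤ pointCount q (m + 1))
    (hbound : (h : ℤ) * ((q - 1) * pointCount q (m + 1) - b) * pointCount q (k + m + 1) ≤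
      c * (q - 1) * pointCount q (m + 1) ^ 2) :
    h * pointCount q m < pointCount q (m + 1) - b := by
  set t := pointCount q (m + 1)
  set u := pointCount q (k + m + 1)
  have ht : (0 : ℤ) < t := by lia
  have hcD : (c : ℤ) ≤ t - b := by lia
  have hD : (0 : ℤ) < t - b := by lia
  suffices (h : ℤ) * pointCount q m < t - b by zify [hb.le]; exact this
  rcases hq.eq_or_lt with rfl | hq3
  · have htu : (t : ℤ) ^ 2 < u := by
      exact_mod_cast pointCount_sq_lt le_rfl m.succ_pos (by have := hq2 rfl; lia)
    have hlt : (h : ℤ) < 1 := weight_lt_one hD hcD (sq_nonneg _) htu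
      (by linear_combination hbound)
    obtain rfl : h = 0 := by lia
    simpa only [Nat.cast_zero, zero_mul] using hD
  · have hpow : (q : ℤ) ^ m ≤ q ^ k := by exact_mod_cast Nat.pow_le_pow_right (by lia) hmk
    have htu : (q : ℤ) ^ k * t ≤ u := by
      exact_mod_cast (add_assoc k m 1 ▸ pointCount_add q k (m + 1)).symm ▸ Nat.le_add_right _ _
    have htq : (t : ℤ) ≤ (q - 2) * t := le_mul_of_one_le_left ht.le (by lia)
    have hle : (h : ℤ) * q ^ k ≤ c * (q - 1) :=
      weight_mul_le ht (by linear_combination htq + hD.le) (by positivity) htu (by positivity)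
        hbound
    have hq1 : (0 : ℤ) < q - 1 := by lia
    refine lt_of_mul_lt_mul_right ?_ hq1.le
    rcases h.eq_zero_or_pos with rfl | hh
    · simpa only [Nat.cast_zero, zero_mul] using mul_pos hD hq1
    calc (h : ℤ) * pointCount q m * (q - 1) = h * (q ^ m - 1) := by
          rw [← sub_one_mul_pointCount]; ring
      _ < h * q ^ k := mul_lt_mul_of_pos_left (by lia) (by exact_mod_cast hh)
      _ ≤ c * (q - 1) := hle
      _ ≤ (t - b) * (q - 1) := mul_le_mul_of_nonneg_right hcD hq1.le

section Points

open Module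

lemma exists_eq_setOf_points_le_of_span_add_mem {F V : Type*} [DivisionRing F]
    [AddCommGroup V] [Module F V] {P : Set (Submodule F V)} (hP : ∀ p ∈ P, finrank F p = 1)
    (hadd : ∀ x y : V, F ∙ x ∈ P → F ∙ y ∈ P → x + y ≠ 0 → F ∙ (x + y) ∈ P) :
    ∃ S : Submodule F V, P = {p : Submodule F V | finrank F p = 1 ∧ p ≤ S} := by
  let T : Projectivization.Subspace F V :=
    { carrier := {x | x.submodule ∈ P}
      mem_add' := fun x y _ _ hxy hx hy => hadd x y hx hy hxy }
  have hT : ∀ x : Projectivization F V, x.submodule ∈ P ↔ x.submodule ≤ T.submodule := fun x => by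
    rw [← Submodule.mem_projectivization_iff_submodule_le, OrderIso.symm_apply_apply]
    rfl
  have hpoint : ∀ p : Submodule F V, finrank F p = 1 → (p ∈ P ↔ p ≤ T.submodule) := fun p hp => by
    simpa only [Projectivization.submodule_mk''] using hT (Projectivization.mk'' p hp)
  exact ⟨T.submodule, Set.ext fun p =>
    ⟨fun hp => ⟨hP p hp, (hpoint p (hP p hp)).1 hp⟩, fun ⟨hp, hpT⟩ => (hpoint p hp).2 hpT⟩⟩

lemma ncard_points_le {F V : Type*} [Field F] [Fintype F] [AddCommGroup V] [Module F V]
    (S : Submodule F V) :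
    {p : Submodule F V | finrank F p = 1 ∧ p ≤ S}.ncard =
      pointCount (Fintype.card F) (finrank F S) := by
  have hmap : {p : Submodule F V | finrank F p = 1 ∧ p ≤ S} =
      Submodule.map S.subtype '' {p : Submodule F S | finrank F p = 1} := by
    ext p
    constructor
    · rintro ⟨hp, hpS⟩
      have hpmap : (p.comap S.subtype).map S.subtype = p := by
        rw [Submodule.map_comap_subtype, inf_eq_right.2 hpS]
      exact ⟨p.comap S.subtype, by
        rw [Set.mem_ofPred_eq, ← Submodule.finrank_map_subtype_eq, hpmap, hp], hpmap⟩
    · rintro ⟨p, hp, rfl⟩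
      exact ⟨(Submodule.finrank_map_subtype_eq S p).trans hp, Submodule.map_subtype_le S p⟩
  rw [hmap, Set.ncard_image_of_injective _ (Submodule.map_injective_of_injective
    S.injective_subtype), ← Nat.card_coe_set_eq, pointCount, ← Nat.card_eq_fintype_card,
    ← Projectivization.card_of_finrank F S rfl]
  exact (Nat.card_congr (Projectivization.equivSubmodule F S)).symm

end Points

section Covers

open Module

variable {F V : Type*} [Field F] [AddCommGroup V] [Module F V]

lemma finrank_of_covBy [FiniteDimensional F V] {U W : Submodule F V} (h : U ⋖ W) :
    finrank F W = finrank F U + 1 := by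
  have hsimple := isSimpleModule_iff_finrank_eq_one.1 ((covBy_iff_quot_is_simple h.le).1 h)
  rw [← Submodule.finrank_quotient_add_finrank (Submodule.comap W.subtype U), hsimple,
    (Submodule.comapSubtypeEquivOfLe h.le).finrank_eq, add_comm]

lemma covBy_comap_mkQ_iff {U : Submodule F V} {p : Submodule F (V ⧸ U)} :
    U ⋖ p.comap U.mkQ ↔ finrank F p = 1 := by
  rw [covBy_iff_atom_Ici (Submodule.le_comap_mkQ U p), ← Submodule.isAtom_iff_finrank_eq_one]
  exact (Submodule.comapMkQRelIso U).isAtom_iff p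

lemma finrank_map_mkQ_add [FiniteDimensional F V] {U S : Submodule F V} (h : U ≤ S) :
    finrank F (S.map U.mkQ) + finrank F U = finrank F S := by
  rw [← LinearMap.finrank_range_add_finrank_ker (U.mkQ.domRestrict S), LinearMap.range_domRestrict,
    LinearMap.ker_domRestrict, Submodule.ker_mkQ, (Submodule.comapSubtypeEquivOfLe h).finrank_eq]

lemma ncard_covBy_le [Fintype F] [FiniteDimensional F V] {U S : Submodule F V} {d : ℕ} (hUS : U ≤ S)
    (hd : finrank F U + d = finrank F S) :
    {W | U ⋖ W ∧ W ≤ S}.ncard = pointCount (Fintype.card F) d := by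
  have hcomap : {W | U ⋖ W ∧ W ≤ S} =
      Submodule.comap U.mkQ '' {p | finrank F p = 1 ∧ p ≤ S.map U.mkQ} := by
    ext W
    constructor
    · rintro ⟨hUW, hWS⟩
      have hW : (W.map U.mkQ).comap U.mkQ = W := by
        rw [Submodule.comap_map_mkQ, sup_eq_right.2 hUW.le]
      exact ⟨W.map U.mkQ, ⟨covBy_comap_mkQ_iff.1 (hW.symm ▸ hUW), Submodule.map_mono hWS⟩, hW⟩
    · rintro ⟨p, ⟨hp, hpS⟩, rfl⟩
      refine ⟨covBy_comap_mkQ_iff.2 hp, (Submodule.comap_mono hpS).trans_eq ?_⟩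
      rw [Submodule.comap_map_mkQ, sup_eq_right.2 hUS]
  rw [hcomap, Set.ncard_image_of_injective _ (Submodule.comap_injective_of_surjective
    U.mkQ_surjective), ncard_points_le]
  have := finrank_map_mkQ_add hUS
  congr 1
  lia

end Covers

section Avoiding

open Finset Module

variable {F V : Type*} [Field F] [Fintype F] [AddCommGroup V] [Module F V] [Finite V]

lemma pointCount_le_ncard_avoiding_covBy_add_card {U : Submodule F V} {d : ℕ}
    (hd : finrank F U + d = finrank F V) {P : Finset (Submodule F V)} (hPU : ∀ p ∈ P, ¬ p ≤ U) :
    pointCount (Fintype.card F) d ≤ {W | U ⋖ W ∧ ∀ p ∈ P, ¬ p ≤ W}.ncard + #P := by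
  have hcover : {W | U ⋖ W ∧ W ≤ ⊤} ⊆
      {W | U ⋖ W ∧ ∀ p ∈ P, ¬ p ≤ W} ∪ (fun p => U ⊔ p) '' (P : Set (Submodule F V)) := by
    rintro W ⟨hUW, -⟩
    by_cases hW : ∀ p ∈ P, ¬ p ≤ W
    · exact Or.inl ⟨hUW, hW⟩
    · push Not at hW
      obtain ⟨p, hp, hpW⟩ := hW
      refine Or.inr ⟨p, hp, (hUW.eq_or_eq le_sup_left (sup_le hUW.le hpW)).resolve_left ?_⟩
      exact fun h => hPU p hp (sup_eq_left.1 h)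
  calc pointCount (Fintype.card F) d = {W | U ⋖ W ∧ W ≤ ⊤}.ncard :=
        (ncard_covBy_le le_top (hd.trans (finrank_top F V).symm)).symm
    _ ≤ _ := Set.ncard_le_ncard hcover
    _ ≤ _ := Set.ncard_union_le _ _
    _ ≤ _ := by
      gcongr
      exact (Set.ncard_image_le P.finite_toSet).trans_eq (Set.ncard_coe_finset P)

lemma exists_covBy_avoiding {U : Submodule F V} {d : ℕ} (hd : finrank F U + d = finrank F V)
    {P : Finset (Submodule F V)} (hPU : ∀ p ∈ P, ¬ p ≤ U)
    (hP : #P < pointCount (Fintype.card F) d) :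
    ∃ W, U ⋖ W ∧ ∀ p ∈ P, ¬ p ≤ W := by
  have hcard := pointCount_le_ncard_avoiding_covBy_add_card hd hPU
  exact Set.nonempty_of_ncard_ne_zero (s := {W | U ⋖ W ∧ ∀ p ∈ P, ¬ p ≤ W}) (by lia)

open scoped Classical in
lemma sum_card_filter_ge_le {U : Submodule F V} {d : ℕ} (hd : finrank F U + (d + 1) = finrank F V)
    {Hs : Finset (Submodule F V)} (hHs : ⊤ ∉ Hs) {G : Finset (Submodule F V)}
    (hG : ∀ W ∈ G, U ⋖ W) :
    ∑ W ∈ G, #{H ∈ Hs | W ≤ H} ≤ #{H ∈ Hs | U ≤ H} * pointCount (Fintype.card F) d := by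
  have hthrough : ∀ W ∈ G, {H ∈ Hs | W ≤ H} = {H ∈ {H ∈ Hs | U ≤ H} | W ≤ H} := fun W hW => by
    rw [filter_filter]
    exact filter_congr fun H _ => (and_iff_right_of_imp (hG W hW).le.trans).symm
  rw [sum_congr rfl fun W hW => congrArg card (hthrough W hW)]
  refine (sum_card_bipartiteAbove_eq_sum_card_bipartiteBelow (· ≤ ·)).trans_le ?_
  refine sum_le_card_nsmul _ _ _ fun H hH => ?_
  obtain ⟨hH, hUH⟩ := mem_filter.1 hH
  have hlt : finrank F H < finrank F V :=
    Submodule.finrank_lt (ne_of_mem_of_not_mem hH hHs)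
  have hle := Submodule.finrank_mono hUH
  calc #{W ∈ G | W ≤ H} ≤ {W | U ⋖ W ∧ W ≤ H}.ncard := by
        rw [← Set.ncard_coe_finset]
        refine Set.ncard_le_ncard fun W hW => ?_
        obtain ⟨hWG, hWH⟩ := mem_filter.1 hW
        exact ⟨hG W hWG, hWH⟩
    _ = pointCount (Fintype.card F) (finrank F H - finrank F U) :=
        ncard_covBy_le hUH (Nat.add_sub_of_le hle)
    _ ≤ pointCount (Fintype.card F) d :=
        (pointCount_strictMono Fintype.card_pos).monotone (by lia)

open scoped Classical in
lemma exists_covBy_avoiding_card_filter_ge_le {U : Submodule F V} {d : ℕ}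
    (hd : finrank F U + (d + 1) = finrank F V) {P Hs : Finset (Submodule F V)}
    (hPU : ∀ p ∈ P, ¬ p ≤ U) (hHs : ⊤ ∉ Hs) (hP : #P < pointCount (Fintype.card F) (d + 1)) :
    ∃ W, U ⋖ W ∧ (∀ p ∈ P, ¬ p ≤ W) ∧
      #{H ∈ Hs | W ≤ H} * (pointCount (Fintype.card F) (d + 1) - #P) ≤
        #{H ∈ Hs | U ≤ H} * pointCount (Fintype.card F) d := by
  obtain ⟨G, hG⟩ := (Set.toFinite {W | U ⋖ W ∧ ∀ p ∈ P, ¬ p ≤ W}).exists_finset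
  obtain ⟨W₀, hW₀⟩ := exists_covBy_avoiding hd hPU hP
  have hcard : pointCount (Fintype.card F) (d + 1) - #P ≤ #G := by
    have hG' : {W | U ⋖ W ∧ ∀ p ∈ P, ¬ p ≤ W} = G := Set.ext fun W => (hG W).symm
    have := pointCount_le_ncard_avoiding_covBy_add_card hd hPU
    rw [hG', Set.ncard_coe_finset] at this
    lia
  obtain ⟨W, hWG, hWmin⟩ := exists_min_image G (fun W => #{H ∈ Hs | W ≤ H}) ⟨W₀, (hG W₀).2 hW₀⟩
  obtain ⟨hUW, hPW⟩ := (hG W).1 hWG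
  refine ⟨W, hUW, hPW, ?_⟩
  calc #{H ∈ Hs | W ≤ H} * (pointCount (Fintype.card F) (d + 1) - #P)
      ≤ #{H ∈ Hs | W ≤ H} * #G := Nat.mul_le_mul_left _ hcard
    _ = #G • #{H ∈ Hs | W ≤ H} := mul_comm _ _
    _ ≤ ∑ W ∈ G, #{H ∈ Hs | W ≤ H} := card_nsmul_le_sum _ _ _ hWmin
    _ ≤ #{H ∈ Hs | U ≤ H} * pointCount (Fintype.card F) d :=
        sum_card_filter_ge_le hd hHs fun W hW => ((hG W).1 hW).1

open scoped Classical in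
lemma exists_avoiding_weight_bound {P Hs : Finset (Submodule F V)} (hP : ⊥ ∉ P) (hHs : ⊤ ∉ Hs)
    {j d : ℕ} (hV : finrank F V = j + d) (hPd : #P < pointCount (Fintype.card F) (d + 1)) :
    ∃ U : Submodule F V, finrank F U = j ∧ (∀ p ∈ P, ¬ p ≤ U) ∧
      (#{H ∈ Hs | U ≤ H} : ℤ) * ((Fintype.card F - 1) * pointCount (Fintype.card F) d - #P) *
          pointCount (Fintype.card F) (j + d) ≤
        #Hs * (Fintype.card F - 1) * pointCount (Fintype.card F) d ^ 2 := by
  have hq : 2 ≤ Fintype.card F := Fintype.one_lt_card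
  induction j generalizing d with
  | zero =>
    refine ⟨⊥, finrank_bot F V, fun p hp hle => hP (le_bot_iff.1 hle ▸ hp), ?_⟩
    have hnonneg : (0 : ℤ) ≤ #Hs * #P * pointCount (Fintype.card F) d := by positivity
    simp only [bot_le, filter_true, zero_add]
    linear_combination hnonneg
  | succ j ih =>
    obtain ⟨U, hU, hPU, hbound⟩ := ih (d := d + 1) (by lia)
      (hPd.trans (pointCount_strictMono (by lia) (Nat.lt_succ_self _)))
    obtain ⟨W, hUW, hPW, hstep⟩ :=
      exists_covBy_avoiding_card_filter_ge_le (by lia) hPU hHs hPd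
    refine ⟨W, by rw [finrank_of_covBy hUW, hU], hPW, ?_⟩
    set q := Fintype.card F
    zify [hPd.le] at hstep
    have hsucc : (pointCount q (d + 1) : ℤ) = q * pointCount q d + 1 := by
      exact_mod_cast pointCount_succ q d
    rw [show j + 1 + d = j + (d + 1) by lia]
    refine weight_bound_step (by positivity) (by positivity) (by lia) (by lia) ?_
      (by positivity) (by positivity) hstep hbound
    exact (Nat.cast_le.2 hPd.le).trans (le_mul_of_one_le_left (by positivity) (by lia))

lemma exists_avoiding {k m : ℕ} (hV : finrank F V = k + m + 1) (hmk : m ≤ k)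
    (hq2 : Fintype.card F = 2 → m ≠ k) {P Hs : Finset (Submodule F V)} (hP : ⊥ ∉ P) (hHs : ⊤ ∉ Hs)
    (hPm : #P < pointCount (Fintype.card F) (m + 1))
    (hPHs : #P + #Hs ≤ pointCount (Fintype.card F) (m + 1)) :
    ∃ U : Submodule F V, finrank F U = k + 1 ∧ (∀ p ∈ P, ¬ p ≤ U) ∧ ∀ H ∈ Hs, ¬ U ≤ H := by
  classical
  have hmono := pointCount_strictMono (Fintype.card_pos (α := F))
  obtain ⟨U, hU, hPU, hbound⟩ := exists_avoiding_weight_bound hP hHs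
    (hV.trans (add_assoc k m 1)) (hPm.trans (hmono (Nat.lt_succ_self _)))
  obtain ⟨W, hUW, hPW, hstep⟩ :=
    exists_covBy_avoiding_card_filter_ge_le (by lia) hPU hHs hPm
  refine ⟨W, by rw [finrank_of_covBy hUW, hU], hPW, ?_⟩
  have hlt := hstep.trans_lt
    (weight_mul_pointCount_lt Fintype.one_lt_card hmk hq2 hPm hPHs hbound)
  have hzero : #{H ∈ Hs | W ≤ H} = 0 :=
    Nat.lt_one_iff.1 (lt_of_mul_lt_mul_right (hlt.trans_eq (one_mul _).symm) zero_le)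
  exact fun H hH => filter_eq_empty_iff.1 (card_eq_zero.1 hzero) hH

lemma exists_ge_avoiding {P : Finset (Submodule F V)} {U : Submodule F V}
    (hPU : ∀ p ∈ P, ¬ p ≤ U) {i d : ℕ} (hd : finrank F U + i + d = finrank F V)
    (hP : #P < pointCount (Fintype.card F) (d + 1)) :
    ∃ W, U ≤ W ∧ finrank F W = finrank F U + i ∧ ∀ p ∈ P, ¬ p ≤ W := by
  induction i generalizing d with
  | zero => exact ⟨U, le_rfl, rfl, hPU⟩
  | succ i ih =>
    have hmono := pointCount_strictMono (Fintype.card_pos (α := F))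
    obtain ⟨W, hUW, hW, hPW⟩ :=
      ih (d := d + 1) (by lia) (hP.trans (hmono (Nat.lt_succ_self _)))
    obtain ⟨W', hWW', hPW'⟩ := exists_covBy_avoiding (d := d + 1) (by lia) hPW hP
    exact ⟨W', hUW.trans hWW'.le, by rw [finrank_of_covBy hWW', hW, add_assoc], hPW'⟩

end Avoiding

section Blocking

open Finset Module

/-- `B₀ ∪ B₁` is a blocking set with respect to `k`-spaces: every `k`-space contains a member of
`B₀` or is contained in a member of `B₁`. The index `k` is the projective dimension, and it is left
to hypotheses that `B₀` consists of points and `B₁` of hyperplanes. -/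
def IsBlockingSet {F V : Type*} [Field F] [AddCommGroup V] [Module F V] (k : ℕ)
    (B₀ B₁ : Set (Submodule F V)) : Prop :=
  ∀ W : Submodule F V, finrank F W = k + 1 → (∃ p ∈ B₀, p ≤ W) ∨ ∃ H ∈ B₁, W ≤ H

variable {F V : Type*} [Field F] [Fintype F] [AddCommGroup V] [Module F V] [Finite V] {k m : ℕ}
  {P : Finset (Submodule F V)}

lemma IsBlockingSet.pointCount_le_card (hV : finrank F V = k + m + 1) (hmk : m ≤ k)
    (hq2 : Fintype.card F = 2 → m ≠ k) {Hs : Finset (Submodule F V)} (hP : ⊥ ∉ P) (hHs : ⊤ ∉ Hs)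
    (hblock : IsBlockingSet k (P : Set (Submodule F V)) Hs)
    (hcard : #P + #Hs ≤ pointCount (Fintype.card F) (m + 1)) :
    pointCount (Fintype.card F) (m + 1) ≤ #P := by
  by_contra! hPm
  obtain ⟨U, hU, hPU, hHU⟩ := exists_avoiding hV hmk hq2 hP hHs hPm hcard
  rcases hblock U hU with ⟨p, hp, hpU⟩ | ⟨H, hH, hUH⟩
  · exact hPU p hp hpU
  · exact hHU H hH hUH

lemma IsBlockingSet.exists_ge_avoiding_of_point (hV : finrank F V = k + m + 1)
    (hP : #P ≤ pointCount (Fintype.card F) (m + 1))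
    (hblock : IsBlockingSet k (P : Set (Submodule F V)) ∅) {r : Submodule F V}
    (hr : finrank F r = 1) (hPr : ∀ p ∈ P, ¬ p ≤ r) :
    ∃ U, r ≤ U ∧ finrank F U = k ∧ ∀ p ∈ P, ¬ p ≤ U := by
  rcases k with - | k
  · obtain ⟨p, hp, hpr⟩ | ⟨H, hH, -⟩ := hblock r hr
    · exact absurd hpr (hPr p hp)
    · exact absurd hH (Set.notMem_empty H)
  · obtain ⟨U, hrU, hU, hPU⟩ := exists_ge_avoiding hPr (i := k) (d := m + 1) (by lia)
      (hP.trans_lt (pointCount_strictMono Fintype.card_pos (Nat.lt_succ_self _)))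
    exact ⟨U, hrU, by lia, hPU⟩

lemma IsBlockingSet.span_add_mem (hV : finrank F V = k + m + 1)
    (hP : ∀ p ∈ P, finrank F p = 1) (hPm : #P ≤ pointCount (Fintype.card F) (m + 1))
    (hblock : IsBlockingSet k (P : Set (Submodule F V)) ∅)
    {x y : V} (hx : F ∙ x ∈ P) (hy : F ∙ y ∈ P) (hxy : x + y ≠ 0) : F ∙ (x + y) ∈ P := by
  classical
  by_contra hxyP
  have hline : finrank F (F ∙ (x + y)) = 1 := finrank_span_singleton hxy
  have hPxy : ∀ p ∈ P, ¬ p ≤ F ∙ (x + y) := fun p hp hle =>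
    hxyP (Submodule.eq_of_le_of_finrank_eq hle ((hP p hp).trans hline.symm) ▸ hp)
  obtain ⟨U, hxyU, hU, hPU⟩ := hblock.exists_ge_avoiding_of_point hV hPm hline hPxy
  obtain ⟨W, hUW, hPW⟩ := exists_covBy_avoiding (d := m + 1) (by lia)
    (fun p hp => hPU p (mem_of_mem_erase hp))
    ((card_erase_lt_of_mem hy).trans_le hPm)
  have hxyW : x + y ∈ W := hUW.le (hxyU (Submodule.mem_span_singleton_self _))
  have hyW : F ∙ y ≤ W := by
    obtain ⟨p, hp, hpW⟩ | ⟨H, hH, -⟩ := hblock W (by rw [finrank_of_covBy hUW, hU])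
    · by_contra hyW
      exact hPW p (mem_erase.2 ⟨fun h => hyW (h ▸ hpW), hp⟩) hpW
    · exact absurd hH (Set.notMem_empty H)
  have hxW : F ∙ x ≤ W := by
    rw [Submodule.span_singleton_le_iff_mem] at hyW ⊢
    exact (W.add_mem_iff_left hyW).1 hxyW
  have hne : F ∙ x ≠ F ∙ y := fun h => by
    have hle : F ∙ (x + y) ≤ F ∙ x := (Submodule.span_singleton_le_iff_mem _ _).2
      (add_mem (Submodule.mem_span_singleton_self x) (h ▸ Submodule.mem_span_singleton_self y))
    exact hxyP (Submodule.eq_of_le_of_finrank_eq hle (hline.trans (hP _ hx).symm) ▸ hx)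
  exact hPW _ (mem_erase.2 ⟨hne, hx⟩) hxW

lemma IsBlockingSet.exists_eq_setOf_points_le (hV : finrank F V = k + m + 1)
    (hP : ∀ p ∈ P, finrank F p = 1) (hPm : #P = pointCount (Fintype.card F) (m + 1))
    (hblock : IsBlockingSet k (P : Set (Submodule F V)) ∅) :
    ∃ S : Submodule F V, finrank F S = m + 1 ∧
      (P : Set (Submodule F V)) = {p : Submodule F V | finrank F p = 1 ∧ p ≤ S} := by
  obtain ⟨S, hS⟩ := exists_eq_setOf_points_le_of_span_add_mem hP
    fun _ _ => hblock.span_add_mem hV hP hPm.le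
  refine ⟨S, (pointCount_strictMono (Fintype.card_pos (α := F))).injective ?_, hS⟩
  rw [← ncard_points_le, ← hS, Set.ncard_coe_finset, hPm]

end Blocking

theorem stmt_4_general {F V : Type*} [Field F] [Fintype F] [AddCommGroup V] [Module F V] {k n : ℕ}
    (hV : Module.finrank F V = n + 1) (hk : k ≤ n) (hkn : n ≤ 2 * k)
    (h2 : Fintype.card F = 2 → n ≠ 2 * k) {B₀ B₁ : Set (Submodule F V)}
    (hB₀ : ∀ p ∈ B₀, Module.finrank F p = 1) (hB₁ : ⊤ ∉ B₁) (hblock : IsBlockingSet k B₀ B₁) :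
    theta (Fintype.card F) (n - k) ≤ B₀.ncard + B₁.ncard ∧
    (B₀.ncard + B₁.ncard = theta (Fintype.card F) (n - k) ↔
      B₁ = ∅ ∧ ∃ W : Submodule F V, Module.finrank F W = n - k + 1 ∧
        B₀ = {p : Submodule F V | Module.finrank F p = 1 ∧ p ≤ W}) := by
  have : Module.Finite F V := Module.finite_of_finrank_eq_succ hV
  have : Finite V := Module.finite_of_finite F
  obtain ⟨m, rfl⟩ := Nat.exists_eq_add_of_le hk
  rw [theta_eq_pointCount Fintype.one_lt_card, Nat.add_sub_cancel_left]
  lift B₀ to Finset (Submodule F V) using B₀.toFinite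
  lift B₁ to Finset (Submodule F V) using B₁.toFinite
  have hbot : ⊥ ∉ B₀ := fun h => by simpa only [finrank_bot, zero_ne_one] using hB₀ ⊥ h
  have hpoints := hblock.pointCount_le_card hV (by lia) (fun h => by have := h2 h; lia) hbot hB₁
  simp only [Set.ncard_coe_finset]
  refine ⟨by lia, fun heq => ?_, fun ⟨h₁, W, hW, h₀⟩ => ?_⟩
  · have hcard := hpoints heq.le
    obtain rfl : B₁ = ∅ := Finset.card_eq_zero.1 (by lia)
    rw [Finset.coe_empty] at hblock ⊢
    exact ⟨rfl, hblock.exists_eq_setOf_points_le hV hB₀ heq⟩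
  · rw [Finset.coe_eq_empty.1 h₁, Finset.card_empty, add_zero, ← Set.ncard_coe_finset, h₀,
      ncard_points_le, hW]

/-- Let `0 ≤ k < n` with `k > (n-1)/2` (i.e. `n ≤ 2k`), and if
`q = 2` suppose `k ≠ n/2` (i.e. `n ≠ 2k`).  For a blocking set `B = B0 ∪ Bn` of
points and hyperplanes with respect to `k`-spaces in `PG(n,q)`, we have
`|B| ≥ θ_(n-k)`, with equality iff `B` consists of all points of a fixed
`(n-k)`-space (a subspace of vector dimension `n-k+1`). -/
theorem stmt_4 {F : Type} [Field F] [Fintype F] (k n : ℕ)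
    (hk : k < n) (hkn : n ≤ 2 * k)
    (h2 : Fintype.card F = 2 → n ≠ 2 * k)
    (B0 Bn : Set (Submodule F (Fin (n + 1) → F)))
    (hB0 : ∀ p ∈ B0, Module.finrank F p = 1)
    (hBn : ∀ H ∈ Bn, Module.finrank F H = n)
    (hblock : ∀ W : Submodule F (Fin (n + 1) → F), Module.finrank F W = k + 1 →
      (∃ p ∈ B0, p ≤ W) ∨ (∃ H ∈ Bn, W ≤ H)) :
    theta (Fintype.card F) (n - k) ≤ B0.ncard + Bn.ncard ∧
    (B0.ncard + Bn.ncard = theta (Fintype.card F) (n - k) ↔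
      Bn = ∅ ∧ ∃ W : Submodule F (Fin (n + 1) → F), Module.finrank F W = n - k + 1 ∧
        B0 = {p : Submodule F (Fin (n + 1) → F) | Module.finrank F p = 1 ∧ p ≤ W}) :=
  stmt_4_general (Module.finrank_fin_fun F) hk.le hkn h2 hB0
    (fun h => by simpa only [finrank_top, Module.finrank_fin_fun, Nat.succ_ne_self] using hBn ⊤ h)
    hblock
end

section
/- Let q be a prime power and let d, s, n be integers with d ≥ 0 and d-1 ≤ s < n. Let B be a set of hyperplanes in PG(n,q) with |B| ≤ θ_d. Then the number of s-spaces of PG(n,q) that are not contained in any element of B is at least q^{(n-s)(d+1)}·C(n-d, n-s)_q + (θ_d - |B|)·q^{(n-s-1)d}·C(n-d, n-s-1)_q, where C(a,b)_q denotes the Gaussian binomial coefficient. -/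
/-- The Gaussian binomial coefficient `C(a,b)_q`, where `q = Fintype.card F`:
the number of `b`-dimensional linear subspaces of `F^a`; it equals
`∏ i in [1..b], (q^(a-b+i)-1)/(q^i-1)`, and is `0` unless `0 ≤ b ≤ a`. -/
noncomputable def gauss (F : Type) [Field F] [Fintype F] (a b : ℕ) : ℕ :=
  Nat.card {W : Submodule F (Fin a → F) // Module.finrank F W = b}

/-!
Taking annihilators turns the hyperplanes into a set `B` of points of the dual space and the
`s`-spaces into subspaces which have to miss `B`. Counting pairs of a point `P ∉ B` and a subspace
through `P` missing `B` expresses their number through the subspaces above `P` which miss the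
projection of `B` from `P`. In the induction on the dimension of the subspaces which this suggests,
everything comes down to a lower bound `(|B| - θ_{d-1}) (θ_d - |B|)` for the total number of points
which `B` loses in its projections from the points off `B`.

That total depends only on `|B|` and on the sum over all lines of the number of points of `B` beyond
the first. If some point `P` has a small loss, counting in the planes through `P` shows that this
sum drops enough under projection from `P` for induction on the dimension of the space to apply;
otherwise all losses are large, and adding them up is enough.
-/

namespace Metsch

open Finset Module
open scoped Classical

section QAnalogues

/-- The `q`-analogue `1 + q + ⋯ + q ^ (c - 1)` of `c`, which is the number `θ_{c-1}` of points
of `PG(c - 1, q)`. -/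
def qNum (q c : ℕ) : ℕ := ∑ i ∈ range c, q ^ i

@[simp] lemma qNum_one (q : ℕ) : qNum q 1 = 1 := by simp [qNum]

lemma qNum_succ (q c : ℕ) : qNum q (c + 1) = qNum q c + q ^ c := sum_range_succ _ _

lemma qNum_succ' (q c : ℕ) : qNum q (c + 1) = q * qNum q c + 1 := geom_sum_succ

lemma qNum_add (q a b : ℕ) : qNum q (a + b) = qNum q a + q ^ a * qNum q b := by
  simp only [qNum, sum_range_add, pow_add, mul_sum]

lemma qNum_mono (q : ℕ) : Monotone (qNum q) := fun _ _ h =>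
  sum_le_sum_of_subset (range_subset_range.2 h)

lemma qNum_succ_pos (q c : ℕ) : 0 < qNum q (c + 1) := by
  rw [qNum_succ']
  exact Nat.succ_pos _

lemma theta_eq_qNum {q : ℕ} (hq : 2 ≤ q) (d : ℕ) : theta q d = qNum q (d + 1) :=
  (Nat.geomSum_eq hq (d + 1)).symm

/-- The Gaussian binomial coefficient `C(a,b)_q`, defined through the `q`-Pascal recursion so that
it makes sense for every natural number `q`. -/
def qBinom (q : ℕ) : ℕ → ℕ → ℕ
  | _, 0 => 1
  | 0, _ + 1 => 0
  | a + 1, b + 1 => qBinom q a b + q ^ (b + 1) * qBinom q a (b + 1)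

@[simp] lemma qBinom_zero_right (q a : ℕ) : qBinom q a 0 = 1 := by cases a <;> rfl

@[simp] lemma qBinom_zero_succ (q b : ℕ) : qBinom q 0 (b + 1) = 0 := rfl

lemma qBinom_succ_succ (q a b : ℕ) :
    qBinom q (a + 1) (b + 1) = qBinom q a b + q ^ (b + 1) * qBinom q a (b + 1) := rfl

lemma qBinom_one_right (q a : ℕ) : qBinom q a 1 = qNum q a := by
  induction a with
  | zero => rfl
  | succ a ih => rw [qBinom_succ_succ, qBinom_zero_right, ih, qNum_succ', pow_one, add_comm]

lemma qNum_succ_mul_qBinom (q a b : ℕ) :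
    qNum q (a + 1) * qBinom q a b = qNum q (b + 1) * qBinom q (a + 1) (b + 1) := by
  induction a generalizing b with
  | zero => cases b <;> simp [qBinom_succ_succ]
  | succ a ih =>
    cases b with
    | zero => simp [qBinom_one_right]
    | succ b =>
      calc qNum q (a + 2) * qBinom q (a + 1) (b + 1)
          = q * (qNum q (a + 1) * qBinom q a b)
            + q ^ (b + 2) * (qNum q (a + 1) * qBinom q a (b + 1)) + qBinom q (a + 1) (b + 1) := by
            rw [qNum_succ' q (a + 1), qBinom_succ_succ]
            ring
        _ = (q * qNum q (b + 1) + 1) * qBinom q (a + 1) (b + 1)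
            + qNum q (b + 2) * (q ^ (b + 2) * qBinom q (a + 1) (b + 2)) := by
            rw [ih b, ih (b + 1)]
            ring
        _ = qNum q (b + 2) * qBinom q (a + 2) (b + 2) := by
            rw [← qNum_succ', qBinom_succ_succ q (a + 1)]
            ring

lemma pow_mul_qBinom_add_qNum_mul_qBinom (q a b : ℕ) :
    q ^ (b + 1) * qBinom q a (b + 1) + qNum q (a + 2) * qBinom q a b
      = qNum q (b + 2) * qBinom q (a + 1) (b + 1) := by
  rw [qNum_succ' q (a + 1), qNum_succ' q (b + 1), add_mul, add_mul, mul_assoc, mul_assoc,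
    qNum_succ_mul_qBinom, qBinom_succ_succ]
  ring

/-- The lower bound for the number of `k`-spaces missing a set of `θ_d - e` points of
`PG(d + m, q)`. -/
def missingBound (q d m k : ℕ) (e : ℤ) : ℤ :=
  q ^ ((k + 1) * (d + 1)) * qBinom q m (k + 1) + e * (q ^ (k * d) * qBinom q m k)

lemma missingBound_add (q d m k : ℕ) (e c : ℤ) :
    missingBound q d m k (e + c) = missingBound q d m k e + c * (q ^ (k * d) * qBinom q m k) := by
  rw [missingBound, missingBound, add_mul e, add_assoc]

lemma qNum_mul_missingBound (q d m k : ℕ) (e : ℤ) :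
    qNum q (k + 2) * missingBound q d (m + 1) (k + 1) e =
      (q ^ (d + 1) * qNum q (m + 1) + e) * missingBound q d m k e
        + (q ^ d - e) * e * (q ^ (k * d) * qBinom q m k) := by
  have hmain : (qNum q (m + 1) * qBinom q m (k + 1) : ℤ)
      = qNum q (k + 2) * qBinom q (m + 1) (k + 2) := mod_cast qNum_succ_mul_qBinom q m (k + 1)
  have hpascal : (q ^ (k + 1) * qBinom q m (k + 1) + qNum q (m + 2) * qBinom q m k : ℤ)
      = qNum q (k + 2) * qBinom q (m + 1) (k + 1) :=
    mod_cast pow_mul_qBinom_add_qNum_mul_qBinom q m k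
  have hsucc : (qNum q (m + 2) : ℤ) = q * qNum q (m + 1) + 1 := mod_cast qNum_succ' q (m + 1)
  rw [hsucc] at hpascal
  simp only [missingBound]
  linear_combination (-q ^ ((k + 2) * (d + 1)) : ℤ) * hmain - e * q ^ ((k + 1) * d) * hpascal

end QAnalogues

section Overspaces

variable {F V : Type*} [Field F] [AddCommGroup V] [Module F V] [Finite V]
variable {S P Q X Y l : Submodule F V} {j k : ℕ}

/-- The subspaces of `V` of dimension `dim S + k` that contain `S`. They are the `(k - 1)`-spaces of
the projective space of `V / S`: points for `k = 1`, lines for `k = 2`, planes for `k = 3`. Working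
above `S` inside `V` replaces passing to quotients, and projecting from a point `P` amounts to
replacing `S` by `P`. -/
noncomputable def overspaces (S : Submodule F V) (k : ℕ) : Finset (Submodule F V) :=
  (Set.toFinite {W : Submodule F V | S ≤ W ∧ finrank F W = finrank F S + k}).toFinset

lemma mem_overspaces : X ∈ overspaces S k ↔ S ≤ X ∧ finrank F X = finrank F S + k := by
  simp [overspaces]

lemma le_of_mem_overspaces (hX : X ∈ overspaces S k) : S ≤ X := (mem_overspaces.1 hX).1

lemma finrank_of_mem_overspaces (hX : X ∈ overspaces S k) : finrank F X = finrank F S + k :=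
  (mem_overspaces.1 hX).2

lemma eq_of_le_of_mem_overspaces (hX : X ∈ overspaces S k) (hY : Y ∈ overspaces S k)
    (h : X ≤ Y) : X = Y :=
  Submodule.eq_of_le_of_finrank_eq h
    ((finrank_of_mem_overspaces hX).trans (finrank_of_mem_overspaces hY).symm)

lemma finrank_eq_of_mem_overspaces_one (hV : finrank F V = finrank F S + (k + 1))
    (hP : P ∈ overspaces S 1) : finrank F V = finrank F P + k := by
  rw [hV, finrank_of_mem_overspaces hP, add_assoc, add_comm 1]

@[simp] lemma overspaces_zero (S : Submodule F V) : overspaces S 0 = {S} := by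
  ext W
  rw [mem_overspaces, mem_singleton, add_zero]
  constructor
  · rintro ⟨hle, hrank⟩
    exact (Submodule.eq_of_le_of_finrank_eq hle hrank.symm).symm
  · rintro rfl
    exact ⟨le_rfl, rfl⟩

lemma mem_overspaces_of_mem_overspaces (hP : P ∈ overspaces S j) :
    X ∈ overspaces P k ↔ X ∈ overspaces S (j + k) ∧ P ≤ X := by
  rw [mem_overspaces, mem_overspaces, finrank_of_mem_overspaces hP, add_assoc]
  exact ⟨fun h => ⟨⟨(le_of_mem_overspaces hP).trans h.1, h.2⟩, h.1⟩, fun h => ⟨h.2, h.1.2⟩⟩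

lemma sup_mem_overspaces (hX : X ∈ overspaces S k) (hP : P ∈ overspaces S 1) (hPX : ¬P ≤ X) :
    X ⊔ P ∈ overspaces S (k + 1) := by
  rw [mem_overspaces] at *
  have hmeet : finrank F (X ⊓ P : Submodule F V) < finrank F P :=
    Submodule.finrank_lt_finrank_of_lt (inf_lt_right.2 hPX)
  have hmeet' : finrank F S ≤ finrank F (X ⊓ P : Submodule F V) :=
    Submodule.finrank_mono (le_inf hX.1 hP.1)
  have hdim := Submodule.finrank_sup_add_finrank_inf_eq X P
  exact ⟨hX.1.trans le_sup_left, by omega⟩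

lemma sup_eq_of_mem_overspaces (hX : X ∈ overspaces S k) (hP : P ∈ overspaces S 1)
    (hPX : ¬P ≤ X) (hY : Y ∈ overspaces S (k + 1)) (hXY : X ≤ Y) (hPY : P ≤ Y) : X ⊔ P = Y :=
  eq_of_le_of_mem_overspaces (sup_mem_overspaces hX hP hPX) hY (sup_le hXY hPY)

lemma sup_mem_overspaces_two (hP : P ∈ overspaces S 1) (hQ : Q ∈ overspaces S 1) (h : P ≠ Q) :
    P ⊔ Q ∈ overspaces S 2 :=
  sup_mem_overspaces hP hQ fun hle => h (eq_of_le_of_mem_overspaces hQ hP hle).symm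

lemma sup_eq_of_mem_overspaces_two (hP : P ∈ overspaces S 1) (hQ : Q ∈ overspaces S 1)
    (h : P ≠ Q) (hl : l ∈ overspaces S 2) (hPl : P ≤ l) (hQl : Q ≤ l) : P ⊔ Q = l :=
  eq_of_le_of_mem_overspaces (sup_mem_overspaces_two hP hQ h) hl (sup_le hPl hQl)

end Overspaces

section Below

variable {F V : Type*} [Field F] [AddCommGroup V] [Module F V]
variable {P Q X x : Submodule F V} {B : Finset (Submodule F V)}

/-- The members of the point set `B` that lie in the subspace `X`. -/
noncomputable def below (B : Finset (Submodule F V)) (X : Submodule F V) :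
    Finset (Submodule F V) := {Q ∈ B | Q ≤ X}

lemma mem_below : Q ∈ below B X ↔ Q ∈ B ∧ Q ≤ X := mem_filter

/-- The projection of the point set `B` from the point `P`: the set of lines joining `P` to the
points of `B`, which are points above `P`. -/
noncomputable def projection (P : Submodule F V) (B : Finset (Submodule F V)) :
    Finset (Submodule F V) := B.image (· ⊔ P)

lemma mem_projection : x ∈ projection P B ↔ ∃ Q ∈ B, Q ⊔ P = x := mem_image

lemma card_projection_le (P : Submodule F V) (B : Finset (Submodule F V)) :
    #(projection P B) ≤ #B := card_image_le

/-- The number of points that `B` loses when it is projected from `P`. -/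
noncomputable def projLoss (P : Submodule F V) (B : Finset (Submodule F V)) : ℤ :=
  #B - #(projection P B)

lemma card_projection (P : Submodule F V) (B : Finset (Submodule F V)) :
    (#(projection P B) : ℤ) = #B - projLoss P B := by
  rw [projLoss, sub_sub_cancel]

lemma projLoss_nonneg (P : Submodule F V) (B : Finset (Submodule F V)) : 0 ≤ projLoss P B :=
  sub_nonneg.2 (mod_cast card_projection_le P B)

/-- The number of points of `B` on `X` in excess of the first one. The subtraction is truncated, so
that the excess is `0` if `X` contains no point of `B`. -/
noncomputable def excess (B : Finset (Submodule F V)) (X : Submodule F V) : ℕ := #(below B X) - 1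

lemma card_mul_excess (B : Finset (Submodule F V)) (X : Submodule F V) :
    #(below B X) * excess B X = #(below B X).offDiag := by
  rw [excess, offDiag_card, Nat.mul_sub_one]

lemma one_le_card_below (hx : x ∈ projection P B) : 1 ≤ #(below B x) := by
  obtain ⟨Q, hQ, rfl⟩ := mem_projection.1 hx
  exact card_pos.2 ⟨Q, mem_below.2 ⟨hQ, le_sup_left⟩⟩

lemma cast_excess (hx : x ∈ projection P B) : (excess B x : ℤ) = #(below B x) - 1 :=
  Nat.cast_pred (one_le_card_below hx)

end Below

section Projection

variable {F V : Type*} [Field F] [AddCommGroup V] [Module F V] [Finite V]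
variable {S P Q E l x : Submodule F V} {B : Finset (Submodule F V)}

/-- The total excess of `B` over all lines. -/
noncomputable def lineExcess (S : Submodule F V) (B : Finset (Submodule F V)) : ℕ :=
  ∑ l ∈ overspaces S 2, excess B l

lemma ne_of_mem_of_mem_sdiff (hP : P ∈ overspaces S 1 \ B) (hQ : Q ∈ B) : Q ≠ P := by
  rintro rfl
  exact (mem_sdiff.1 hP).2 hQ

lemma sup_mem_overspaces_one (hB : B ⊆ overspaces S 1) (hP : P ∈ overspaces S 1 \ B)
    (hQ : Q ∈ B) : Q ⊔ P ∈ overspaces P 1 :=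
  (mem_overspaces_of_mem_overspaces (mem_sdiff.1 hP).1).2
    ⟨sup_mem_overspaces_two (hB hQ) (mem_sdiff.1 hP).1 (ne_of_mem_of_mem_sdiff hP hQ), le_sup_right⟩

lemma projection_subset (hB : B ⊆ overspaces S 1) (hP : P ∈ overspaces S 1 \ B) :
    projection P B ⊆ overspaces P 1 :=
  image_subset_iff.2 fun _ hQ => sup_mem_overspaces_one hB hP hQ

lemma sup_eq_iff_le (hB : B ⊆ overspaces S 1) (hP : P ∈ overspaces S 1 \ B) (hQ : Q ∈ B)
    (hx : x ∈ overspaces P 1) : Q ⊔ P = x ↔ Q ≤ x :=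
  ⟨fun h => h ▸ le_sup_left, fun h => eq_of_le_of_mem_overspaces
    (sup_mem_overspaces_one hB hP hQ) hx (sup_le h (le_of_mem_overspaces hx))⟩

lemma below_nonempty_iff (hB : B ⊆ overspaces S 1) (hP : P ∈ overspaces S 1 \ B)
    (hx : x ∈ overspaces P 1) : (below B x).Nonempty ↔ x ∈ projection P B := by
  simp only [Finset.Nonempty, mem_below, mem_projection]
  exact exists_congr fun Q => and_congr_right fun hQ => (sup_eq_iff_le hB hP hQ hx).symm

lemma card_eq_sum_card_below (hB : B ⊆ overspaces S 1) (hP : P ∈ overspaces S 1 \ B) :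
    #B = ∑ x ∈ projection P B, #(below B x) := by
  rw [card_eq_sum_card_image (· ⊔ P) B]
  refine sum_congr rfl fun x hx => congrArg card (filter_congr fun Q hQ => ?_)
  exact sup_eq_iff_le hB hP hQ (projection_subset hB hP hx)

lemma projLoss_eq_sum_projection (hB : B ⊆ overspaces S 1) (hP : P ∈ overspaces S 1 \ B) :
    projLoss P B = ∑ x ∈ projection P B, (excess B x : ℤ) := by
  rw [sum_congr rfl fun x hx => cast_excess hx, sum_sub_distrib, projLoss,
    card_eq_sum_card_below hB hP]
  simp

lemma projLoss_eq_sum_lines (hB : B ⊆ overspaces S 1) (hP : P ∈ overspaces S 1 \ B) :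
    projLoss P B = ∑ l ∈ overspaces S 2 with P ≤ l, (excess B l : ℤ) := by
  have hlines : {l ∈ overspaces S 2 | P ≤ l} = overspaces P 1 := by
    ext l
    rw [mem_filter, mem_overspaces_of_mem_overspaces (mem_sdiff.1 hP).1]
  rw [projLoss_eq_sum_projection hB hP, hlines]
  refine sum_subset (projection_subset hB hP) fun l hl hlB => ?_
  rw [← below_nonempty_iff hB hP hl, not_nonempty_iff_eq_empty] at hlB
  simp [excess, hlB]

/-- The lines of the plane `E` that miss the point `P`. -/
noncomputable def linesMissing (S P E : Submodule F V) : Finset (Submodule F V) :=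
  {l ∈ overspaces S 2 | ¬P ≤ l ∧ l ⊔ P = E}

lemma mem_linesMissing : l ∈ linesMissing S P E ↔ l ∈ overspaces S 2 ∧ ¬P ≤ l ∧ l ⊔ P = E :=
  mem_filter

lemma lineExcess_eq_projLoss_add_sum (hB : B ⊆ overspaces S 1) (hP : P ∈ overspaces S 1 \ B) :
    (lineExcess S B : ℤ) =
      projLoss P B + ∑ E ∈ overspaces P 2, ∑ l ∈ linesMissing S P E, (excess B l : ℤ) := by
  have hmaps : ∀ l ∈ {l ∈ overspaces S 2 | ¬P ≤ l}, l ⊔ P ∈ overspaces P 2 := by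
    intro l hl
    obtain ⟨hl, hPl⟩ := mem_filter.1 hl
    have hP := (mem_sdiff.1 hP).1
    exact (mem_overspaces_of_mem_overspaces hP).2 ⟨sup_mem_overspaces hl hP hPl, le_sup_right⟩
  rw [lineExcess, Nat.cast_sum, ← sum_filter_add_sum_filter_not _ (P ≤ ·),
    projLoss_eq_sum_lines hB hP, ← sum_fiberwise_of_maps_to hmaps]
  simp only [linesMissing, filter_filter]

lemma sum_offDiag_below {M : Type*} [AddCommMonoid M] (hB : B ⊆ overspaces S 1)
    (f : Submodule F V × Submodule F V → M) :
    ∑ l ∈ overspaces S 2, ∑ p ∈ (below B l).offDiag, f p = ∑ p ∈ B.offDiag, f p := by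
  have hmaps : ∀ p ∈ B.offDiag, p.1 ⊔ p.2 ∈ overspaces S 2 := fun p hp => by
    obtain ⟨h₁, h₂, hne⟩ := mem_offDiag.1 hp
    exact sup_mem_overspaces_two (hB h₁) (hB h₂) hne
  rw [← sum_fiberwise_of_maps_to hmaps]
  refine sum_congr rfl fun l hl => sum_congr ?_ fun _ _ => rfl
  ext ⟨Q, R⟩
  simp only [mem_offDiag, mem_filter, mem_below]
  constructor
  · rintro ⟨⟨hQ, hQl⟩, ⟨hR, hRl⟩, hne⟩
    exact ⟨⟨hQ, hR, hne⟩, sup_eq_of_mem_overspaces_two (hB hQ) (hB hR) hne hl hQl hRl⟩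
  · rintro ⟨⟨hQ, hR, hne⟩, rfl⟩
    exact ⟨⟨hQ, le_sup_left⟩, ⟨hR, le_sup_right⟩, hne⟩

lemma sum_card_mul_excess (hB : B ⊆ overspaces S 1) :
    ∑ l ∈ overspaces S 2, (#(below B l) * excess B l : ℤ) = #B * (#B - 1) := by
  have hpairs := sum_offDiag_below hB fun _ => 1
  simp only [← card_eq_sum_ones, ← card_mul_excess] at hpairs
  rw [mul_sub_one, ← Nat.cast_mul, ← Nat.cast_sub (Nat.le_mul_self _), ← offDiag_card, ← hpairs]
  push_cast
  rfl

end Projection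

section Planes

variable {F V : Type*} [Field F] [AddCommGroup V] [Module F V] [Finite V]
variable {S P Q R E l x : Submodule F V} {B : Finset (Submodule F V)}

lemma excess_projection_le_card_sdiff (hB : B ⊆ overspaces S 1) (hP : P ∈ overspaces S 1 \ B)
    (hx : x ∈ overspaces P 1) :
    excess (projection P B) E ≤ #(below B E \ below B x) := by
  refine (pred_card_le_card_erase (a := x)).trans
    (card_le_card_of_surjOn (· ⊔ P) fun y hy => ?_)
  obtain ⟨hyx, hy⟩ := mem_erase.1 hy
  obtain ⟨hyB, hyE⟩ := mem_below.1 hy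
  obtain ⟨Q, hQ, rfl⟩ := mem_projection.1 hyB
  have hQx : ¬Q ≤ x := fun h => hyx ((sup_eq_iff_le hB hP hQ hx).2 h)
  exact ⟨Q, by simp [mem_below, hQ, hQx, le_sup_left.trans hyE], rfl⟩

lemma sup_mem_linesMissing (hB : B ⊆ overspaces S 1) (hP : P ∈ overspaces S 1 \ B)
    (hE : E ∈ overspaces P 2) (hx : x ∈ overspaces P 1) (hxE : x ≤ E)
    (hQ : Q ∈ below B x) (hR : R ∈ below B E \ below B x) : Q ⊔ R ∈ linesMissing S P E := by
  obtain ⟨hQB, hQx⟩ := mem_below.1 hQ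
  obtain ⟨hRE, hRx⟩ := mem_sdiff.1 hR
  obtain ⟨hRB, hRE⟩ := mem_below.1 hRE
  have hRx : ¬R ≤ x := fun h => hRx (mem_below.2 ⟨hRB, h⟩)
  have hP₁ := (mem_sdiff.1 hP).1
  have hQR : Q ⊔ R ∈ overspaces S 2 :=
    sup_mem_overspaces_two (hB hQB) (hB hRB) fun h => hRx (h ▸ hQx)
  have hspan : Q ⊔ R ⊔ P = E := by
    rw [sup_right_comm, (sup_eq_iff_le hB hP hQB hx).2 hQx]
    exact sup_eq_of_mem_overspaces ((mem_overspaces_of_mem_overspaces hP₁).1 hx).1 (hB hRB) hRx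
      ((mem_overspaces_of_mem_overspaces hP₁).1 hE).1 hxE hRE
  refine mem_linesMissing.2 ⟨hQR, fun hPQR => hRx ?_, hspan⟩
  rw [← (sup_eq_iff_le hB hP hQB hx).2 hQx, sup_eq_of_mem_overspaces_two (hB hQB) hP₁
    (ne_of_mem_of_mem_sdiff hP hQB) hQR le_sup_left hPQR]
  exact le_sup_right

lemma card_below_inter_below_le_one (hB : B ⊆ overspaces S 1) (hP : P ∈ overspaces S 1 \ B)
    (hl : l ∈ linesMissing S P E) (hx : x ∈ overspaces P 1) :
    #(below B x ∩ below B l) ≤ 1 := by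
  obtain ⟨hl, hPl, -⟩ := mem_linesMissing.1 hl
  have hx₂ := ((mem_overspaces_of_mem_overspaces (mem_sdiff.1 hP).1).1 hx).1
  refine card_le_one.2 fun Q hQ R hR => by_contra fun hne => hPl ?_
  simp only [mem_inter, mem_below] at hQ hR
  obtain ⟨⟨hQB, hQx⟩, -, hQl⟩ := hQ
  obtain ⟨⟨hRB, hRx⟩, -, hRl⟩ := hR
  rw [← sup_eq_of_mem_overspaces_two (hB hQB) (hB hRB) hne hl hQl hRl,
    sup_eq_of_mem_overspaces_two (hB hQB) (hB hRB) hne hx₂ hQx hRx]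
  exact le_of_mem_overspaces hx

lemma card_filter_sup_eq_le_excess (hB : B ⊆ overspaces S 1) (hP : P ∈ overspaces S 1 \ B)
    (hl : l ∈ linesMissing S P E) (hx : x ∈ overspaces P 1) :
    #{p ∈ below B x ×ˢ (below B E \ below B x) | p.1 ⊔ p.2 = l} ≤ excess B l := by
  have hsub : {p ∈ below B x ×ˢ (below B E \ below B x) | p.1 ⊔ p.2 = l} ⊆
      (below B x ∩ below B l) ×ˢ (below B l \ below B x) := by
    rintro ⟨Q, R⟩ hp
    simp only [mem_filter, mem_product, mem_inter, mem_sdiff, mem_below] at hp ⊢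
    obtain ⟨⟨hQ, hR, hRx⟩, rfl⟩ := hp
    exact ⟨⟨hQ, hQ.1, le_sup_left⟩, ⟨hR.1, le_sup_right⟩, hRx⟩
  refine (card_le_card hsub).trans ?_
  have hone := card_below_inter_below_le_one hB hP hl hx
  have hsplit := card_inter_add_card_sdiff (below B l) (below B x)
  rw [inter_comm] at hsplit
  rw [card_product, excess]
  interval_cases #(below B x ∩ below B l) <;> omega

/-- Each point of `B` on the line `x` through `P` is joined to every point of `B` in the plane `E`
off `x` by a line missing `P`, and such a line meets `x` only once. -/
lemma card_below_mul_excess_projection_le (hB : B ⊆ overspaces S 1)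
    (hP : P ∈ overspaces S 1 \ B) (hE : E ∈ overspaces P 2) (hx : x ∈ overspaces P 1)
    (hxE : x ≤ E) :
    #(below B x) * excess (projection P B) E ≤ ∑ l ∈ linesMissing S P E, excess B l :=
  calc #(below B x) * excess (projection P B) E
      ≤ #(below B x ×ˢ (below B E \ below B x)) := by
        rw [card_product]
        gcongr
        exact excess_projection_le_card_sdiff hB hP hx
    _ = ∑ l ∈ linesMissing S P E,
          #{p ∈ below B x ×ˢ (below B E \ below B x) | p.1 ⊔ p.2 = l} :=
        card_eq_sum_card_fiberwise fun p hp =>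
          have hp := mem_product.1 hp
          sup_mem_linesMissing hB hP hE hx hxE hp.1 hp.2
    _ ≤ ∑ l ∈ linesMissing S P E, excess B l :=
        sum_le_sum fun _ hl => card_filter_sup_eq_le_excess hB hP hl hx

lemma sum_offDiag_mul_one_sub {ι : Type*} (K : Finset ι) (y : ι → ℤ) (q : ℤ) :
    ∑ p ∈ K.offDiag, y p.1 * (1 - q * y p.2)
      = ∑ a ∈ K, y a * (#K - 1 - q * ∑ b ∈ K.erase a, y b) := by
  rw [sum_finset_product _ K K.erase fun p => by rw [mem_offDiag, mem_erase, ne_comm]; tauto]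
  refine sum_congr rfl fun a ha => ?_
  dsimp only
  rw [← mul_sum, sum_sub_distrib, ← mul_sum, sum_const, card_erase_of_mem ha, nsmul_one,
    Nat.cast_pred (card_pos.2 ⟨a, ha⟩)]

lemma mul_le_sum_offDiag {ι : Type*} (K : Finset ι) (y : ι → ℤ) {q : ℤ} (hq : 0 ≤ q) :
    (∑ a ∈ K, y a) * (#K - 1 - q * (∑ a ∈ K, y a - 1))
      ≤ ∑ p ∈ K.offDiag, y p.1 * (1 - q * y p.2) := by
  rw [sum_offDiag_mul_one_sub, sum_mul]
  refine sum_le_sum fun a ha => ?_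
  rw [← add_sum_erase _ _ ha]
  linarith [mul_nonneg hq (sub_nonneg.2 (Int.le_self_sq (y a)))]

/-- Let `a` maximise `y`. Any other `b` with `y b ≠ 0` has `y a ≥ 1`, so that its summands add up
to at most `y b * (#K - 1 - q) ≤ 0`. -/
lemma card_sub_one_add_sum_offDiag_le {ι : Type*} {K : Finset ι} {y : ι → ℤ} {q w : ℤ}
    (hK : K.Nonempty) (hy : ∀ a ∈ K, 0 ≤ y a) (hq : #K ≤ q + 1)
    (hw : ∀ a ∈ K, (y a + 1) * (#K - 1) ≤ w) :
    #K - 1 + ∑ p ∈ K.offDiag, y p.1 * (1 - q * y p.2) ≤ w := by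
  have hcard : (1 : ℤ) ≤ #K := mod_cast hK.card_pos
  obtain ⟨a, ha, hmax⟩ := exists_max_image K y hK
  have hothers : ∑ b ∈ K.erase a, y b * (#K - 1 - q * ∑ c ∈ K.erase b, y c) ≤ 0 := by
    refine sum_nonpos fun b hb => ?_
    obtain ⟨hba, hb⟩ := mem_erase.1 hb
    rcases (hy b hb).eq_or_lt with hzero | hpos
    · rw [← hzero, zero_mul]
    · have hsum : y a ≤ ∑ c ∈ K.erase b, y c :=
        single_le_sum (fun c hc => hy c (mem_of_mem_erase hc)) (mem_erase.2 ⟨hba.symm, ha⟩)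
      refine mul_nonpos_of_nonneg_of_nonpos hpos.le ?_
      nlinarith [hmax b hb]
  have hfirst : y a * (#K - 1 - q * ∑ b ∈ K.erase a, y b) ≤ y a * (#K - 1) := by
    have hsum : 0 ≤ ∑ b ∈ K.erase a, y b := sum_nonneg fun b hb => hy b (mem_of_mem_erase hb)
    exact mul_le_mul_of_nonneg_left (sub_le_self _ (mul_nonneg (by linarith) hsum)) (hy a ha)
  rw [sum_offDiag_mul_one_sub, ← add_sum_erase _ _ ha]
  linarith [hw a ha]

end Planes

section VectorsOff

variable {F V : Type*} [Field F] [AddCommGroup V] [Module F V] [Finite V]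
variable {S P X Z : Submodule F V} {v : V}

/-- The vectors of `X` outside `S`. Sorting them by the point `S ⊔ F ∙ v` which they generate above
`S` counts the points of `X`. -/
noncomputable def vectorsOff (S X : Submodule F V) : Finset V :=
  (Set.toFinite ((X : Set V) \ S)).toFinset

lemma mem_vectorsOff : v ∈ vectorsOff S X ↔ v ∈ X ∧ v ∉ S := by simp [vectorsOff]

lemma sup_span_singleton_mem_overspaces (hv : v ∉ S) : S ⊔ F ∙ v ∈ overspaces S 1 :=
  mem_overspaces.2 ⟨le_sup_left, Submodule.finrank_sup_span_singleton hv⟩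

lemma filter_vectorsOff_eq (hP : P ∈ below (overspaces S 1) Z) :
    {v ∈ vectorsOff S Z | S ⊔ F ∙ v = P} = vectorsOff S P := by
  obtain ⟨hP, hPZ⟩ := mem_below.1 hP
  ext v
  simp only [mem_filter, mem_vectorsOff]
  constructor
  · rintro ⟨⟨-, hvS⟩, rfl⟩
    exact ⟨le_sup_right (a := S) (Submodule.mem_span_singleton_self v), hvS⟩
  · rintro ⟨hvP, hvS⟩
    exact ⟨⟨hPZ hvP, hvS⟩, eq_of_le_of_mem_overspaces (sup_span_singleton_mem_overspaces hvS) hP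
      (sup_le (le_of_mem_overspaces hP) ((Submodule.span_singleton_le_iff_mem v P).2 hvP))⟩

end VectorsOff

section PointCount

variable {F V : Type*} [Field F] [Fintype F] [AddCommGroup V] [Module F V] [Finite V]
variable {S X Z l : Submodule F V} {B : Finset (Submodule F V)} {c : ℕ}

local notation "q" => Fintype.card F

lemma card_vectorsOff (hX : X ∈ overspaces S c) :
    #(vectorsOff S X) = qNum q c * (q ^ finrank F S * (q - 1)) := by
  have hcard (Y : Submodule F V) : (Y : Set V).ncard = q ^ finrank F Y :=
    (natCard_eq_pow_finrank (K := F) (V := Y)).trans (by rw [Nat.card_eq_fintype_card])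
  rw [vectorsOff, ← Set.ncard_eq_toFinset_card, Set.ncard_sdiff (le_of_mem_overspaces hX), hcard,
    hcard, finrank_of_mem_overspaces hX, mul_left_comm, qNum,
    geom_sum_mul_of_one_le Fintype.card_pos, Nat.mul_sub_one, pow_add]

lemma card_below_overspaces_one (hZ : Z ∈ overspaces S c) :
    #(below (overspaces S 1) Z) = qNum q c := by
  have hmaps : ∀ v ∈ vectorsOff S Z, S ⊔ F ∙ v ∈ below (overspaces S 1) Z := fun v hv => by
    obtain ⟨hvZ, hvS⟩ := mem_vectorsOff.1 hv
    exact mem_below.2 ⟨sup_span_singleton_mem_overspaces hvS,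
      sup_le (le_of_mem_overspaces hZ) ((Submodule.span_singleton_le_iff_mem v Z).2 hvZ)⟩
  have hpos : 0 < q ^ finrank F S * (q - 1) :=
    mul_pos (pow_pos Fintype.card_pos _) (Nat.sub_pos_of_lt Fintype.one_lt_card)
  refine Nat.eq_of_mul_eq_mul_right hpos ?_
  rw [← card_vectorsOff hZ, card_eq_sum_card_fiberwise hmaps]
  refine (sum_const_nat fun P hP => ?_).symm
  rw [filter_vectorsOff_eq hP, card_vectorsOff (mem_below.1 hP).1, qNum_one, one_mul]

lemma card_overspaces_one (hV : finrank F V = finrank F S + c) :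
    #(overspaces S 1) = qNum q c := by
  rw [← card_below_overspaces_one (mem_overspaces.2 ⟨le_top, (finrank_top F V).trans hV⟩), below,
    filter_true_of_mem fun _ _ => le_top]

lemma card_below_le (hB : B ⊆ overspaces S 1) (hZ : Z ∈ overspaces S c) :
    #(below B Z) ≤ qNum q c :=
  (card_le_card (filter_subset_filter _ hB)).trans_eq (card_below_overspaces_one hZ)

lemma card_le_qNum (hB : B ⊆ overspaces S 1) (hV : finrank F V = finrank F S + c) :
    #B ≤ qNum q c :=
  (card_le_card hB).trans_eq (card_overspaces_one hV)

lemma cast_card_filter_sdiff (hB : B ⊆ overspaces S 1) (hl : l ∈ overspaces S 2) :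
    (#{P ∈ overspaces S 1 \ B | P ≤ l} : ℤ) = q + 1 - #(below B l) := by
  have hsub : below B l ⊆ below (overspaces S 1) l := filter_subset_filter _ hB
  have heq : {P ∈ overspaces S 1 \ B | P ≤ l} = below (overspaces S 1) l \ below B l := by
    ext P
    simp only [mem_filter, mem_sdiff, mem_below]
    tauto
  rw [heq, cast_card_sdiff hsub, card_below_overspaces_one hl, qNum_succ', qNum_one, mul_one]
  push_cast
  rfl

lemma sum_projLoss (hB : B ⊆ overspaces S 1) :
    ∑ P ∈ overspaces S 1 \ B, projLoss P B = (q + 1) * lineExcess S B - #B * (#B - 1) := by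
  calc ∑ P ∈ overspaces S 1 \ B, projLoss P B
      = ∑ P ∈ overspaces S 1 \ B, ∑ l ∈ overspaces S 2 with P ≤ l, (excess B l : ℤ) :=
        sum_congr rfl fun P hP => projLoss_eq_sum_lines hB hP
    _ = ∑ l ∈ overspaces S 2, ∑ P ∈ overspaces S 1 \ B with P ≤ l, (excess B l : ℤ) :=
        sum_comm' fun P l => by simp only [mem_filter]; tauto
    _ = ∑ l ∈ overspaces S 2, ((q + 1) * excess B l - #(below B l) * excess B l : ℤ) :=
        sum_congr rfl fun l hl => by
          rw [sum_const, nsmul_eq_mul, cast_card_filter_sdiff hB hl, sub_mul]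
    _ = (q + 1) * lineExcess S B - #B * (#B - 1) := by
        rw [sum_sub_distrib, sum_card_mul_excess hB, ← mul_sum, lineExcess, Nat.cast_sum]

end PointCount

section StepInequality

variable {F V : Type*} [Field F] [Fintype F] [AddCommGroup V] [Module F V] [Finite V]
variable {S P E : Submodule F V} {B : Finset (Submodule F V)}

local notation "q" => Fintype.card F

lemma excess_add_sum_offDiag_le (hB : B ⊆ overspaces S 1) (hP : P ∈ overspaces S 1 \ B)
    (hE : E ∈ overspaces P 2) :
    excess (projection P B) E + ∑ p ∈ (below (projection P B) E).offDiag,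
        (excess B p.1 : ℤ) * (1 - q * excess B p.2)
      ≤ ∑ l ∈ linesMissing S P E, (excess B l : ℤ) := by
  have hD := projection_subset hB hP
  rcases (below (projection P B) E).eq_empty_or_nonempty with hempty | hK
  · simp only [excess, hempty, card_empty, offDiag_empty, sum_empty]
    positivity
  · have hline : #(below (projection P B) E) ≤ q + 1 :=
      (card_below_le hD hE).trans_eq (by rw [qNum_succ', qNum_one, mul_one])
    rw [excess, Nat.cast_pred hK.card_pos]
    refine card_sub_one_add_sum_offDiag_le hK (fun _ _ => Nat.cast_nonneg _) (mod_cast hline)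
      fun x hx => ?_
    obtain ⟨hx, hxE⟩ := mem_below.1 hx
    rw [cast_excess hx, sub_add_cancel, ← Nat.cast_pred hK.card_pos]
    exact mod_cast card_below_mul_excess_projection_le hB hP hE (hD hx) hxE

lemma lineExcess_projection_add_le (hB : B ⊆ overspaces S 1) (hP : P ∈ overspaces S 1 \ B) :
    lineExcess P (projection P B) + projLoss P B * (#B + q - (q + 1) * projLoss P B)
      ≤ lineExcess S B := by
  have hplanes := sum_le_sum fun E hE => excess_add_sum_offDiag_le hB hP (E := E) hE
  rw [sum_add_distrib, sum_offDiag_below (projection_subset hB hP)] at hplanes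
  have hpairs := mul_le_sum_offDiag (projection P B) (fun x => (excess B x : ℤ)) 
    (Nat.cast_nonneg q)
  rw [← projLoss_eq_sum_projection hB hP, card_projection] at hpairs
  rw [lineExcess_eq_projLoss_add_sum hB hP, lineExcess, Nat.cast_sum]
  linarith

end StepInequality

section TotalLoss

variable {F V : Type*} [Field F] [Fintype F] [AddCommGroup V] [Module F V] [Finite V]
variable {S P : Submodule F V} {B : Finset (Submodule F V)} {d n : ℕ}

local notation "q" => Fintype.card F

lemma cast_card_overspaces_one_sdiff (hV : finrank F V = finrank F S + n)
    (hB : B ⊆ overspaces S 1) : (#(overspaces S 1 \ B) : ℤ) = qNum q n - #B := by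
  rw [cast_card_sdiff hB, card_overspaces_one hV]

lemma sub_qNum_mul_qNum_sub_le_of_finrank_eq (hV : finrank F V = finrank F S + (d + 1))
    (hB : B ⊆ overspaces S 1) :
    (#B - qNum q d) * (qNum q (d + 1) - #B) ≤ ∑ P ∈ overspaces S 1 \ B, projLoss P B := by
  rw [mul_comm, ← cast_card_overspaces_one_sdiff hV hB, ← nsmul_eq_mul]
  refine card_nsmul_le_sum _ _ _ fun P hP => ?_
  have hproj : #(projection P B) ≤ qNum q d := card_le_qNum (projection_subset hB hP)
    (finrank_eq_of_mem_overspaces_one hV (mem_sdiff.1 hP).1)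
  exact sub_le_sub_left (mod_cast hproj) _

lemma sub_qNum_mul_qNum_sub_le_of_projLoss_le (hB : B ⊆ overspaces S 1)
    (hP : P ∈ overspaces S 1 \ B) (hsmall : (q + 1) * projLoss P B ≤ #B - qNum q d)
    (hproj : (#(projection P B) - qNum q d) * (qNum q (d + 1) - #(projection P B))
      ≤ ∑ R ∈ overspaces P 1 \ projection P B, projLoss R (projection P B)) :
    (#B - qNum q d) * (qNum q (d + 1) - #B) ≤ ∑ R ∈ overspaces S 1 \ B, projLoss R B := by
  have hstep := lineExcess_projection_add_le hB hP
  have hgain : 0 ≤ projLoss P B * (#B - qNum q d - (q + 1) * projLoss P B + q) :=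
    mul_nonneg (projLoss_nonneg P B) (by linarith [Nat.cast_nonneg (α := ℤ) q])
  rw [sum_projLoss (projection_subset hB hP), card_projection] at hproj
  rw [sum_projLoss hB]
  simp only [qNum_succ', Nat.cast_add, Nat.cast_mul, Nat.cast_one] at hproj ⊢
  linear_combination hproj + (q + 1) * hstep + (q + 1) * hgain

lemma sub_qNum_mul_qNum_sub_le_of_le_projLoss (hdn : d < n)
    (hV : finrank F V = finrank F S + (n + 1)) (hB : B ⊆ overspaces S 1)
    (hcard : qNum q d ≤ #B)
    (hlarge : ∀ P ∈ overspaces S 1 \ B, #B - qNum q d ≤ (q + 1) * projLoss P B) :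
    (#B - qNum q d) * (qNum q (d + 1) - #B) ≤ ∑ P ∈ overspaces S 1 \ B, projLoss P B := by
  have hcard : (0 : ℤ) ≤ #B - qNum q d := sub_nonneg.2 (mod_cast hcard)
  have hpoints : (q + 1 : ℤ) * (qNum q (d + 1) - #B) ≤ qNum q (n + 1) - #B := by
    have hmono : (qNum q (d + 2) : ℤ) ≤ qNum q (n + 1) := mod_cast qNum_mono q (by omega)
    simp only [qNum_succ q (d + 1), qNum_succ q d, pow_succ, Nat.cast_add, Nat.cast_mul,
      Nat.cast_pow] at hmono ⊢
    linarith [mul_nonneg (Nat.cast_nonneg (α := ℤ) q) hcard]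
  refine le_of_mul_le_mul_left ?_ (by positivity : (0 : ℤ) < q + 1)
  calc (q + 1 : ℤ) * ((#B - qNum q d) * (qNum q (d + 1) - #B))
      ≤ (qNum q (n + 1) - #B) * (#B - qNum q d) := by
        linarith [mul_le_mul_of_nonneg_right hpoints hcard]
    _ ≤ (q + 1) * ∑ P ∈ overspaces S 1 \ B, projLoss P B := by
        rw [← cast_card_overspaces_one_sdiff hV hB, ← nsmul_eq_mul, mul_sum]
        exact card_nsmul_le_sum _ _ _ hlarge

theorem sub_qNum_mul_qNum_sub_le_sum_projLoss (hdn : d ≤ n)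
    (hV : finrank F V = finrank F S + (n + 1)) (hB : B ⊆ overspaces S 1) :
    (#B - qNum q d) * (qNum q (d + 1) - #B) ≤ ∑ P ∈ overspaces S 1 \ B, projLoss P B := by
  induction n, hdn using Nat.le_induction generalizing S B with
  | base => exact sub_qNum_mul_qNum_sub_le_of_finrank_eq hV hB
  | succ n hdn ih =>
    by_cases hsmall : ∃ P ∈ overspaces S 1 \ B, (q + 1) * projLoss P B ≤ #B - qNum q d
    · obtain ⟨P, hP, hsmall⟩ := hsmall
      exact sub_qNum_mul_qNum_sub_le_of_projLoss_le hB hP hsmall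
        (ih (finrank_eq_of_mem_overspaces_one hV (mem_sdiff.1 hP).1) (projection_subset hB hP))
    · push Not at hsmall
      rcases le_total (qNum q d) #B with hcard | hcard
      · exact sub_qNum_mul_qNum_sub_le_of_le_projLoss (Nat.lt_succ_of_le hdn) hV hB hcard
          fun P hP => (hsmall P hP).le
      · have hle : #B ≤ qNum q (d + 1) := hcard.trans (qNum_mono q d.le_succ)
        refine (mul_nonpos_of_nonpos_of_nonneg ?_ ?_).trans
          (sum_nonneg fun P _ => projLoss_nonneg P B)
        · exact sub_nonpos.2 (mod_cast hcard)
        · exact sub_nonneg.2 (mod_cast hle)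

end TotalLoss

section Missing

variable {F V : Type*} [Field F] [AddCommGroup V] [Module F V] [Finite V]
variable {S P W : Submodule F V} {B : Finset (Submodule F V)} {k : ℕ}

/-- The members of `overspaces S k` that contain no member of `B`. -/
noncomputable def missing (S : Submodule F V) (B : Finset (Submodule F V)) (k : ℕ) :
    Finset (Submodule F V) := {W ∈ overspaces S k | ∀ Q ∈ B, ¬Q ≤ W}

lemma mem_missing : W ∈ missing S B k ↔ W ∈ overspaces S k ∧ ∀ Q ∈ B, ¬Q ≤ W := mem_filter

@[simp] lemma missing_empty (S : Submodule F V) (k : ℕ) : missing S ∅ k = overspaces S k :=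
  filter_true_of_mem fun _ _ _ hQ => absurd hQ (notMem_empty _)

lemma missing_one (hB : B ⊆ overspaces S 1) : missing S B 1 = overspaces S 1 \ B := by
  ext W
  rw [mem_missing, mem_sdiff]
  refine and_congr_right fun hW => ⟨fun h hWB => h W hWB le_rfl, fun hWB Q hQ hle => hWB ?_⟩
  exact eq_of_le_of_mem_overspaces (hB hQ) hW hle ▸ hQ

lemma filter_missing_eq (hP : P ∈ overspaces S 1) :
    {W ∈ missing S B (k + 1) | P ≤ W} = missing P (projection P B) k := by
  ext W
  simp only [mem_filter, mem_missing, mem_overspaces_of_mem_overspaces hP, projection,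
    forall_mem_image, sup_le_iff, not_and, add_comm k 1]
  grind

lemma filter_overspaces_one_sdiff_eq (hW : W ∈ missing S B k) :
    {P ∈ overspaces S 1 \ B | P ≤ W} = below (overspaces S 1) W := by
  ext P
  simp only [mem_filter, mem_sdiff, mem_below, and_right_comm (c := P ≤ W)]
  exact and_iff_left_of_imp fun h hPB => (mem_missing.1 hW).2 P hPB h.2

end Missing

section Counting

variable {F V : Type*} [Field F] [Fintype F] [AddCommGroup V] [Module F V] [Finite V]
variable {S : Submodule F V} {B : Finset (Submodule F V)} {d m k : ℕ}

local notation "q" => Fintype.card F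

lemma qNum_mul_card_missing (S : Submodule F V) (B : Finset (Submodule F V)) (k : ℕ) :
    qNum q (k + 1) * #(missing S B (k + 1)) =
      ∑ P ∈ overspaces S 1 \ B, #(missing P (projection P B) k) :=
  calc qNum q (k + 1) * #(missing S B (k + 1))
      = ∑ W ∈ missing S B (k + 1), #{P ∈ overspaces S 1 \ B | P ≤ W} := by
        rw [mul_comm]
        refine (sum_const_nat fun W hW => ?_).symm
        rw [filter_overspaces_one_sdiff_eq hW, card_below_overspaces_one (mem_missing.1 hW).1]
    _ = ∑ P ∈ overspaces S 1 \ B, #{W ∈ missing S B (k + 1) | P ≤ W} :=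
        (sum_card_bipartiteAbove_eq_sum_card_bipartiteBelow (· ≤ ·)).symm
    _ = ∑ P ∈ overspaces S 1 \ B, #(missing P (projection P B) k) :=
        sum_congr rfl fun P hP => by rw [filter_missing_eq (mem_sdiff.1 hP).1]

theorem card_overspaces (hV : finrank F V = finrank F S + m) :
    #(overspaces S k) = qBinom q m k := by
  induction k generalizing S m with
  | zero => simp
  | succ k ih =>
    refine Nat.eq_of_mul_eq_mul_left (qNum_succ_pos q k) ?_
    have hrec := qNum_mul_card_missing S ∅ k
    simp only [missing_empty, projection, image_empty, sdiff_empty] at hrec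
    rw [hrec]
    cases m with
    | zero => rw [card_eq_zero.1 (card_overspaces_one hV), sum_empty, qBinom_zero_succ, mul_zero]
    | succ m =>
      rw [sum_const_nat fun P hP => ih (finrank_eq_of_mem_overspaces_one hV hP),
        card_overspaces_one hV, qNum_succ_mul_qBinom]

lemma qNum_mul_missingBound_le (hV : finrank F V = finrank F S + (d + m + 2))
    (hB : B ⊆ overspaces S 1) :
    qNum q (k + 2) * missingBound q d (m + 1) (k + 1) (qNum q (d + 1) - #B) ≤
      ∑ P ∈ overspaces S 1 \ B, missingBound q d m k (qNum q (d + 1) - #(projection P B)) := by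
  set e : ℤ := qNum q (d + 1) - #B with he
  have hloss := sub_qNum_mul_qNum_sub_le_sum_projLoss (by omega : d ≤ d + m + 1) hV hB
  have hcoeff : (#B - qNum q d : ℤ) = q ^ d - e := by
    rw [he, qNum_succ]
    push_cast
    ring
  have hpoints : (#(overspaces S 1 \ B) : ℤ) = q ^ (d + 1) * qNum q (m + 1) + e := by
    rw [cast_card_overspaces_one_sdiff hV hB, he,
      show d + m + 2 = d + 1 + (m + 1) by ring, qNum_add]
    push_cast
    ring
  have hproj (P : Submodule F V) :
      (qNum q (d + 1) - #(projection P B) : ℤ) = e + projLoss P B := by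
    rw [card_projection, he]
    ring
  calc qNum q (k + 2) * missingBound q d (m + 1) (k + 1) e
      = (q ^ (d + 1) * qNum q (m + 1) + e) * missingBound q d m k e
        + (q ^ d - e) * e * (q ^ (k * d) * qBinom q m k) := qNum_mul_missingBound ..
    _ ≤ (q ^ (d + 1) * qNum q (m + 1) + e) * missingBound q d m k e
        + (∑ P ∈ overspaces S 1 \ B, projLoss P B) * (q ^ (k * d) * qBinom q m k) := by
        rw [← hcoeff]
        gcongr
    _ = ∑ P ∈ overspaces S 1 \ B, missingBound q d m k (qNum q (d + 1) - #(projection P B)) := by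
        simp only [hproj, missingBound_add, sum_add_distrib, sum_const, sum_mul, nsmul_eq_mul,
          hpoints]

theorem missingBound_le_card_missing (hV : finrank F V = finrank F S + (d + m + 1))
    (hB : B ⊆ overspaces S 1) :
    missingBound q d m k (qNum q (d + 1) - #B) ≤ #(missing S B (k + 1)) := by
  induction k generalizing S B m with
  | zero =>
    rw [missing_one hB, cast_card_overspaces_one_sdiff hV hB, add_right_comm, qNum_add q (d + 1),
      missingBound, qBinom_one_right]
    simp [add_sub_assoc, add_comm]
  | succ k ih =>
    cases m with
    | zero => simp [missingBound]
    | succ m =>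
      refine le_of_mul_le_mul_left ((qNum_mul_missingBound_le hV hB).trans ?_)
        (mod_cast qNum_succ_pos q (k + 1) : (0 : ℤ) < qNum q (k + 2))
      rw [← Nat.cast_mul, qNum_mul_card_missing, Nat.cast_sum]
      exact sum_le_sum fun P hP =>
        ih (finrank_eq_of_mem_overspaces_one hV (mem_sdiff.1 hP).1) (projection_subset hB hP)

end Counting

lemma gauss_eq_qBinom (F : Type) [Field F] [Fintype F] (a b : ℕ) :
    gauss F a b = qBinom (Fintype.card F) a b := by
  have hrank : finrank F (Fin a → F) = finrank F (⊥ : Submodule F (Fin a → F)) + a := by simp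
  rw [← card_overspaces hrank, ← Nat.card_eq_finsetCard, gauss]
  exact Nat.card_congr (Equiv.subtypeEquivRight fun W => by simp [mem_overspaces])

section Duality

variable {F V : Type*} [Field F] [AddCommGroup V] [Module F V] [Module.Finite F V]
  [Finite (Dual F V)] {B : Finset (Submodule F V)} {j k n : ℕ}

lemma coe_missing_image_dualAnnihilator (B : Finset (Submodule F V))
    (hjk : j + k = finrank F V) :
    (missing ⊥ (B.image Submodule.dualAnnihilator) k : Set (Submodule F (Dual F V))) =
      Submodule.dualAnnihilator '' {W : Submodule F V | finrank F W = j ∧ ∀ H ∈ B, ¬W ≤ H} := by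
  have hmem (W : Submodule F V) :
      W.dualAnnihilator ∈ missing ⊥ (B.image Submodule.dualAnnihilator) k ↔
        finrank F W = j ∧ ∀ H ∈ B, ¬W ≤ H := by
    have hrank := Subspace.finrank_add_finrank_dualAnnihilator_eq W
    simp only [mem_missing, mem_overspaces, bot_le, true_and, finrank_bot, zero_add,
      forall_mem_image, Subspace.dualAnnihilator_le_dualAnnihilator_iff]
    exact and_congr_left fun _ => by omega
  ext Φ
  constructor
  · intro hΦ
    rw [← Subspace.dualCoannihilator_dualAnnihilator_eq (W := Φ)] at hΦ ⊢
    exact ⟨_, (hmem _).1 hΦ, rfl⟩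
  · rintro ⟨W, hW, rfl⟩
    exact (hmem W).2 hW

lemma ncard_setOf_forall_not_le (B : Finset (Submodule F V)) (hjk : j + k = finrank F V) :
    {W : Submodule F V | finrank F W = j ∧ ∀ H ∈ B, ¬W ≤ H}.ncard =
      #(missing ⊥ (B.image Submodule.dualAnnihilator) k) := by
  rw [← Set.ncard_coe_finset, coe_missing_image_dualAnnihilator B hjk,
    Set.ncard_image_of_injective _ fun _ _ => Subspace.dualAnnihilator_inj.1]

lemma image_dualAnnihilator_subset (hn : finrank F V = n + 1)
    (hB : ∀ H ∈ B, finrank F H = n) :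
    B.image Submodule.dualAnnihilator ⊆ overspaces ⊥ 1 :=
  image_subset_iff.2 fun H hH => by
    have hrank := Subspace.finrank_add_finrank_dualAnnihilator_eq H
    rw [hB H hH, hn, Nat.add_left_cancel_iff] at hrank
    exact mem_overspaces.2 ⟨bot_le, by rw [hrank, finrank_bot]⟩

end Duality

end Metsch

open Metsch Module in
theorem stmt_6_general {F : Type} [Field F] [Fintype F] {V : Type*} [AddCommGroup V] [Module F V]
    (d s n : ℕ) (hdn : d ≤ n) (hsn : s < n) (hV : finrank F V = n + 1) (B : Set (Submodule F V))
    (hB : ∀ H ∈ B, finrank F H = n) :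
    (Fintype.card F ^ ((n - s) * (d + 1)) * gauss F (n - d) (n - s) : ℤ) +
      ((theta (Fintype.card F) d : ℤ) - B.ncard) *
        (Fintype.card F ^ ((n - s - 1) * d) * gauss F (n - d) (n - s - 1)) ≤
    {W : Submodule F V | finrank F W = s + 1 ∧ ∀ H ∈ B, ¬ W ≤ H}.ncard := by
  classical
  have : Module.Finite F V := finite_of_finrank_pos (by omega)
  have : Finite V := Module.finite_of_finite F
  have : Finite (Dual F V) := Module.finite_of_finite F
  obtain ⟨B, rfl⟩ := B.toFinite.exists_finset_coe
  obtain ⟨k, rfl⟩ := Nat.exists_eq_add_of_lt hsn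
  obtain ⟨m, hm⟩ := Nat.exists_eq_add_of_le hdn
  have hdual : finrank F (Dual F V) = finrank F (⊥ : Submodule F (Dual F V)) + (d + m + 1) := by
    rw [Subspace.dual_finrank_eq, hV, finrank_bot, zero_add, hm]
  have hbound := missingBound_le_card_missing (k := k) hdual (image_dualAnnihilator_subset hV hB)
  rw [← ncard_setOf_forall_not_le B (j := s + 1) (by omega),
    Finset.card_image_of_injective _ fun _ _ => Subspace.dualAnnihilator_inj.1,
    ← theta_eq_qNum Fintype.one_lt_card, missingBound] at hbound
  rw [Set.ncard_coe_finset, gauss_eq_qBinom, gauss_eq_qBinom, show s + k + 1 - s = k + 1 by omega,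
    show s + k + 1 - d = m by omega]
  exact hbound

/-- dual of Metsch's theorem.  Let `d ≥ 0`, `d - 1 ≤ s < n`, and
let `B` be a set of hyperplanes of `PG(n,q)` with `|B| ≤ θ_d`.  Then the number of
`s`-spaces not contained in any element of `B` is at least
`q^((n-s)(d+1))·C(n-d, n-s)_q + (θ_d - |B|)·q^((n-s-1)d)·C(n-d, n-s-1)_q`. -/
theorem stmt_6 {F : Type} [Field F] [Fintype F] (d s n : ℕ)
    (hds : d ≤ s + 1) (hsn : s < n)
    (B : Set (Submodule F (Fin (n + 1) → F)))
    (hB : ∀ H ∈ B, Module.finrank F H = n)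
    (hcard : B.ncard ≤ theta (Fintype.card F) d) :
    (Fintype.card F) ^ ((n - s) * (d + 1)) * gauss F (n - d) (n - s) +
      (theta (Fintype.card F) d - B.ncard) * ((Fintype.card F) ^ ((n - s - 1) * d) * gauss F (n - d) (n - s - 1)) ≤
    {W : Submodule F (Fin (n + 1) → F) | Module.finrank F W = s + 1 ∧ ∀ H ∈ B, ¬ W ≤ H}.ncard := by
  have hbound := stmt_6_general d s n (by omega) hsn (by simp) B hB
  exact_mod_cast Nat.cast_sub (R := ℤ) hcard ▸ hbound
end

section
/- Let q be a prime power, k ≥ 1, and n = 2k+1. Let B = B_0 ∪ B_{n-1} be a blocking set with respect to k-spaces in PG(2k+1,q) consisting of points and hyperplanes, and let ρ be a (k-1)-space containing no point of B_0. Then the number N of hyperplanes of B_{n-1} containing ρ satisfies q^k·N ≥ (q+1)·q^k - |B_0| (equivalently, N ≥ q + 1 - |B_0|/q^k). -/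
/-!
Project from `ρ`: in the quotient space the blocking condition says that the images of the points
of `B₀` and of the hyperplanes through `ρ` together cover every nonzero vector. If some hyperplane
`H₀` through `ρ` is available, count the vectors outside `H₀`: each further hyperplane covers only
the part of it off a codimension-two space, and each point covers at most `q - 1` vectors. If no
hyperplane passes through `ρ`, the points alone must cover all nonzero vectors.
-/

open Module

theorem ncard_biUnion_le_ncard_mul {α ι : Type*} {t : Set ι} (ht : t.Finite) (s : ι → Set α) (c : ℕ)
    (hs : ∀ i ∈ t, (s i).ncard ≤ c) : (⋃ i ∈ t, s i).ncard ≤ t.ncard * c := by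
  calc (⋃ i ∈ t, s i).ncard = (⋃ i ∈ ht.toFinset, s i).ncard := by
        simp only [Set.Finite.mem_toFinset]
    _ ≤ ∑ i ∈ ht.toFinset, (s i).ncard := ht.toFinset.set_ncard_biUnion_le s
    _ ≤ ht.toFinset.card * c :=
        Finset.sum_le_card_nsmul _ _ _ fun i hi ↦ hs i (ht.mem_toFinset.1 hi)
    _ = t.ncard * c := by rw [Set.ncard_eq_toFinset_card t ht]

section

variable {F V : Type*} [DivisionRing F] [AddCommGroup V] [Module F V]

theorem finrank_map_mkQ_add_finrank [FiniteDimensional F V] {ρ W : Submodule F V} (h : ρ ≤ W) :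
    finrank F (W.map ρ.mkQ) + finrank F ρ = finrank F W := by
  have rank_nullity := (ρ.mkQ.domRestrict W).finrank_range_add_finrank_ker
  rwa [LinearMap.range_domRestrict, LinearMap.ker_domRestrict, Submodule.ker_mkQ,
    (Submodule.comapSubtypeEquivOfLe h).finrank_eq] at rank_nullity

theorem ncard_sdiff_add_pow_finrank_inf [Finite F] [FiniteDimensional F V] (W A : Submodule F V) :
    ((W : Set V) \ A).ncard + Nat.card F ^ finrank F ↥(W ⊓ A) = Nat.card F ^ finrank F W := by
  have : Finite V := Module.finite_of_finite F
  rw [← natCard_eq_pow_finrank, ← natCard_eq_pow_finrank, add_comm]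
  exact Set.ncard_inter_add_ncard_sdiff_eq_ncard (W : Set V) A

theorem ncard_sdiff_le_of_le_finrank_inf [Finite F] [FiniteDimensional F V] {W A : Submodule F V}
    {m : ℕ} (hW : finrank F W = m + 1) (hWA : m ≤ finrank F ↥(W ⊓ A)) :
    ((W : Set V) \ A).ncard ≤ Nat.card F ^ m * (Nat.card F - 1) := by
  have card_sdiff := ncard_sdiff_add_pow_finrank_inf W A
  have pow_le := Nat.pow_le_pow_right Nat.card_pos hWA (n := Nat.card F)
  rw [hW, pow_succ] at card_sdiff
  rw [Nat.mul_sub_one]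
  omega

theorem ncard_compl_add_pow_finrank [Finite F] [FiniteDimensional F V] (A : Submodule F V) :
    (A : Set V)ᶜ.ncard + Nat.card F ^ finrank F A = Nat.card F ^ finrank F V := by
  have card_sdiff := ncard_sdiff_add_pow_finrank_inf ⊤ A
  rwa [Submodule.top_coe, ← Set.compl_eq_univ_sdiff, top_inf_eq, finrank_top] at card_sdiff

/-- A blocking set `B₀ ∪ B₁` of points and hyperplanes of the projective space of `V`, with respect
to the projective subspaces of vector space dimension `d`. All projective subspaces are encoded as
linear subspaces, so points have dimension one and hyperplanes have codimension one. -/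
structure IsBlockingSet_s7 (B₀ B₁ : Set (Submodule F V)) (d : ℕ) : Prop where
  finrank_point : ∀ p ∈ B₀, finrank F p = 1
  finrank_hyperplane : ∀ H ∈ B₁, finrank F H + 1 = finrank F V
  exists_le : ∀ W : Submodule F V, finrank F W = d → (∃ p ∈ B₀, p ≤ W) ∨ ∃ H ∈ B₁, W ≤ H

namespace IsBlockingSet_s7

variable {B₀ B₁ : Set (Submodule F V)} {d : ℕ}

theorem map_mkQ [FiniteDimensional F V] {ρ : Submodule F V}
    (hB : IsBlockingSet_s7 B₀ B₁ (finrank F ρ + d)) (hρ : ∀ p ∈ B₀, ¬ p ≤ ρ) :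
    IsBlockingSet_s7 (Submodule.map ρ.mkQ '' B₀) (Submodule.map ρ.mkQ '' {H ∈ B₁ | ρ ≤ H}) d where
  finrank_point := by
    rintro _ ⟨p, hp, rfl⟩
    have map_ne_bot : p.map ρ.mkQ ≠ ⊥ := fun h ↦
      hρ p hp (by rwa [← LinearMap.le_ker_iff_map, Submodule.ker_mkQ] at h)
    exact le_antisymm ((Submodule.finrank_map_le _ p).trans_eq (hB.finrank_point p hp))
      (Submodule.one_le_finrank_iff.2 map_ne_bot)
  finrank_hyperplane := by
    rintro _ ⟨H, ⟨hH, hρH⟩, rfl⟩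
    have := finrank_map_mkQ_add_finrank hρH
    have := ρ.finrank_quotient_add_finrank
    have := hB.finrank_hyperplane H hH
    omega
  exists_le W hW := by
    have map_comap : (W.comap ρ.mkQ).map ρ.mkQ = W :=
      Submodule.map_comap_eq_of_surjective ρ.mkQ_surjective W
    have finrank_comap : finrank F (W.comap ρ.mkQ) = finrank F ρ + d := by
      rw [← finrank_map_mkQ_add_finrank (ρ.le_comap_mkQ W), map_comap, hW, add_comm]
    rcases hB.exists_le _ finrank_comap with ⟨p, hp, hpW⟩ | ⟨H, hH, hWH⟩
    · exact .inl ⟨_, ⟨p, hp, rfl⟩, Submodule.map_le_iff_le_comap.2 hpW⟩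
    · exact .inr ⟨_, ⟨H, ⟨hH, (ρ.le_comap_mkQ W).trans hWH⟩, rfl⟩,
        map_comap.ge.trans (Submodule.map_mono hWH)⟩

theorem exists_mem (hB : IsBlockingSet_s7 B₀ B₁ 1) {v : V} (hv : v ≠ 0) :
    (∃ p ∈ B₀, v ∈ p) ∨ ∃ H ∈ B₁, v ∈ H := by
  refine (hB.exists_le (F ∙ v) (finrank_span_singleton hv)).imp ?_ ?_
  · rintro ⟨p, hp, hpv⟩
    have : p = F ∙ v := Submodule.eq_of_le_of_finrank_eq hpv
      (by rw [hB.finrank_point p hp, finrank_span_singleton hv])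
    exact ⟨p, hp, this ▸ Submodule.mem_span_singleton_self v⟩
  · rintro ⟨H, hH, hvH⟩
    exact ⟨H, hH, hvH (Submodule.mem_span_singleton_self v)⟩

section Counting

variable [Finite F] [FiniteDimensional F V]

theorem ncard_compl_le (hB : IsBlockingSet_s7 B₀ B₁ 1) (A : Submodule F V) {c : ℕ}
    (hc : ∀ H ∈ B₁, H ≠ A → ((H : Set V) \ A).ncard ≤ c) :
    (A : Set V)ᶜ.ncard ≤ B₀.ncard * (Nat.card F - 1) + (B₁ \ {A}).ncard * c := by
  have : Finite V := Module.finite_of_finite F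
  have covering : (A : Set V)ᶜ ⊆
      (⋃ p ∈ B₀, (p : Set V) \ A) ∪ ⋃ H ∈ B₁ \ {A}, (H : Set V) \ A := by
    intro v hvA
    have hv : v ≠ 0 := fun h ↦ hvA (h ▸ A.zero_mem)
    rcases hB.exists_mem hv with ⟨p, hp, hvp⟩ | ⟨H, hH, hvH⟩
    · exact .inl (Set.mem_biUnion hp ⟨hvp, hvA⟩)
    · have hHA : H ≠ A := fun h ↦ hvA (h ▸ hvH)
      exact .inr (Set.mem_biUnion ⟨hH, hHA⟩ ⟨hvH, hvA⟩)
  have point_sdiff_le : ∀ p ∈ B₀, ((p : Set V) \ A).ncard ≤ Nat.card F - 1 := fun p hp ↦ by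
    simpa only [pow_zero, one_mul] using
      ncard_sdiff_le_of_le_finrank_inf (hB.finrank_point p hp) (Nat.zero_le _)
  calc (A : Set V)ᶜ.ncard
      ≤ (⋃ p ∈ B₀, (p : Set V) \ A).ncard + (⋃ H ∈ B₁ \ {A}, (H : Set V) \ A).ncard :=
        (Set.ncard_le_ncard covering).trans (Set.ncard_union_le _ _)
    _ ≤ B₀.ncard * (Nat.card F - 1) + (B₁ \ {A}).ncard * c :=
        add_le_add
          (ncard_biUnion_le_ncard_mul B₀.toFinite _ _ point_sdiff_le)
          (ncard_biUnion_le_ncard_mul (B₁ \ {A}).toFinite _ _ fun H hH ↦ hc H hH.1 hH.2)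

theorem mul_pow_le_ncard_of_empty (hB : IsBlockingSet_s7 B₀ ∅ 1) {m : ℕ} (hV : finrank F V = m + 2) :
    (Nat.card F + 1) * Nat.card F ^ m ≤ B₀.ncard := by
  have card_compl := ncard_compl_add_pow_finrank (⊥ : Submodule F V)
  rw [finrank_bot, pow_zero, hV] at card_compl
  have covered := hB.ncard_compl_le ⊥ (c := 0) (by simp)
  rw [mul_zero, add_zero] at covered
  have hq : 0 < Nat.card F - 1 := Nat.sub_pos_of_lt Finite.one_lt_card
  have pow_add_two : (Nat.card F + 1) * Nat.card F ^ m * (Nat.card F - 1) + Nat.card F ^ m =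
      Nat.card F ^ (m + 2) := by
    obtain ⟨r, hr⟩ := Nat.exists_eq_add_of_le' (Nat.card_pos (α := F))
    rw [hr, Nat.add_sub_cancel]
    ring
  have := Nat.one_le_pow m (Nat.card F) Nat.card_pos
  exact Nat.le_of_mul_le_mul_right (by omega) hq

theorem pow_le_ncard_add_of_mem (hB : IsBlockingSet_s7 B₀ B₁ 1) {m : ℕ} (hV : finrank F V = m + 2)
    {H₀ : Submodule F V} (hH₀ : H₀ ∈ B₁) :
    Nat.card F ^ (m + 1) ≤ B₀.ncard + (B₁ \ {H₀}).ncard * Nat.card F ^ m := by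
  have finrank_eq : ∀ H ∈ B₁, finrank F H = m + 1 := fun H hH ↦ by
    have := hB.finrank_hyperplane H hH
    omega
  have le_finrank_inf : ∀ H ∈ B₁, m ≤ finrank F ↥(H ⊓ H₀) := fun H hH ↦ by
    have := Submodule.finrank_sup_add_finrank_inf_eq H H₀
    have := Submodule.finrank_le (H ⊔ H₀)
    have := finrank_eq H hH
    have := finrank_eq H₀ hH₀
    omega
  have card_compl := ncard_compl_add_pow_finrank H₀
  rw [finrank_eq H₀ hH₀, hV, pow_succ _ (m + 1)] at card_compl
  have hq : 0 < Nat.card F - 1 := Nat.sub_pos_of_lt Finite.one_lt_card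
  refine Nat.le_of_mul_le_mul_right ?_ hq
  calc Nat.card F ^ (m + 1) * (Nat.card F - 1) = (H₀ : Set V)ᶜ.ncard := by
        rw [Nat.mul_sub_one]; omega
    _ ≤ B₀.ncard * (Nat.card F - 1) +
          (B₁ \ {H₀}).ncard * (Nat.card F ^ m * (Nat.card F - 1)) :=
        hB.ncard_compl_le H₀ fun H hH _ ↦
          ncard_sdiff_le_of_le_finrank_inf (finrank_eq H hH) (le_finrank_inf H hH)
    _ = (B₀.ncard + (B₁ \ {H₀}).ncard * Nat.card F ^ m) * (Nat.card F - 1) := by ring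

end Counting

theorem mul_pow_le_mul_ncard_add_ncard [Finite F] (hB : IsBlockingSet_s7 B₀ B₁ 1) {m : ℕ}
    (hV : finrank F V = m + 2) :
    (Nat.card F + 1) * Nat.card F ^ m ≤ Nat.card F ^ m * B₁.ncard + B₀.ncard := by
  have : FiniteDimensional F V := .of_finrank_pos (by omega)
  have : Finite V := Module.finite_of_finite F
  rcases B₁.eq_empty_or_nonempty with rfl | ⟨H₀, hH₀⟩
  · simpa using hB.mul_pow_le_ncard_of_empty hV
  · calc (Nat.card F + 1) * Nat.card F ^ m = Nat.card F ^ (m + 1) + Nat.card F ^ m := by ring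
      _ ≤ B₀.ncard + (B₁ \ {H₀}).ncard * Nat.card F ^ m + Nat.card F ^ m :=
          add_le_add_left (hB.pow_le_ncard_add_of_mem hV hH₀) _
      _ = Nat.card F ^ m * B₁.ncard + B₀.ncard := by
          rw [← Set.ncard_sdiff_singleton_add_one hH₀]; ring

end IsBlockingSet_s7

end

theorem stmt_7_general {F V : Type*} [DivisionRing F] [Finite F] [AddCommGroup V] [Module F V]
    {m : ℕ} {B₀ B₁ : Set (Submodule F V)} {ρ : Submodule F V}
    (hV : finrank F V = finrank F ρ + m + 2) (hB : IsBlockingSet_s7 B₀ B₁ (finrank F ρ + 1))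
    (hρ : ∀ p ∈ B₀, ¬ p ≤ ρ) :
    (Nat.card F + 1) * Nat.card F ^ m ≤
      Nat.card F ^ m * {H ∈ B₁ | ρ ≤ H}.ncard + B₀.ncard := by
  have : FiniteDimensional F V := .of_finrank_pos (by omega)
  have : Finite V := Module.finite_of_finite F
  have finrank_quotient : finrank F (V ⧸ ρ) = m + 2 := by
    have := ρ.finrank_quotient_add_finrank
    omega
  calc (Nat.card F + 1) * Nat.card F ^ m
      ≤ Nat.card F ^ m * (Submodule.map ρ.mkQ '' {H ∈ B₁ | ρ ≤ H}).ncard +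
          (Submodule.map ρ.mkQ '' B₀).ncard :=
        (hB.map_mkQ hρ).mul_pow_le_mul_ncard_add_ncard finrank_quotient
    _ ≤ Nat.card F ^ m * {H ∈ B₁ | ρ ≤ H}.ncard + B₀.ncard := by
        gcongr <;> exact Set.ncard_image_le

/-- Let `B = B0 ∪ Bn` be a blocking set of points and hyperplanes
with respect to `k`-spaces in `PG(2k+1,q)` and let `ρ` be a `(k-1)`-space containing
no point of `B0`.  Then the number `N` of hyperplanes of `Bn` through `ρ` satisfies
`q^k·N ≥ (q+1)·q^k - |B0|`, stated here as `(q+1)·q^k ≤ q^k·N + |B0|`. -/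
theorem stmt_7 {F : Type} [Field F] [Fintype F] (k : ℕ) (hk : 1 ≤ k)
    (B0 Bn : Set (Submodule F (Fin (2 * k + 2) → F)))
    (hB0 : ∀ p ∈ B0, Module.finrank F p = 1)
    (hBn : ∀ H ∈ Bn, Module.finrank F H = 2 * k + 1)
    (hblock : ∀ W : Submodule F (Fin (2 * k + 2) → F), Module.finrank F W = k + 1 →
      (∃ p ∈ B0, p ≤ W) ∨ (∃ H ∈ Bn, W ≤ H))
    (ρ : Submodule F (Fin (2 * k + 2) → F)) (hρ : Module.finrank F ρ = k)
    (hρB0 : ∀ p ∈ B0, ¬ p ≤ ρ) :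
    (Fintype.card F + 1) * (Fintype.card F) ^ k ≤
      (Fintype.card F) ^ k * {H ∈ Bn | ρ ≤ H}.ncard + B0.ncard := by
  have hV : finrank F (Fin (2 * k + 2) → F) = finrank F ρ + k + 2 := by
    rw [finrank_fin_fun, hρ]; ring
  have hB : IsBlockingSet_s7 B0 Bn (finrank F ρ + 1) :=
    ⟨hB0, fun H hH ↦ by rw [hBn H hH, finrank_fin_fun], hρ.symm ▸ hblock⟩
  simpa only [Nat.card_eq_fintype_card] using stmt_7_general hV hB hρB0
end
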